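/- Define a partial order ⪯ on P by: μ ⪯ λ iff λ − μ ∈ Q and Conv [μ₊, μ] ⊆ Conv [λ₊, λ]. Then: (a) for every λ ∈ P the set {μ ∈ P : μ ⪯ λ} = Conv [λ₊, λ] ∩ (λ + Q) is finite; (b) the intertwining operator 𝒥 is triangular with respect to ⪯: for every λ ∈ P there exist complex coefficients J_{λ,μ} (μ ⪯ λ), not depending on f, such that (𝒥 f)(λ) = ∑_{μ ⪯ λ} J_{λ,μ} f(μ) for every f : P → ℂ, and the diagonal coefficient equals J_{λ,λ} = τ_{w_λ}⁻². -/

import Mathlib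

open scoped RealInnerProductSpace BigOperators Classical

noncomputable section

/-- Alternating composition `A ∘ B ∘ A ∘ ⋯` with `m` factors (starting with `A`). -/
def altComp {α : Type*} (A B : α → α) : ℕ → (α → α)
  | 0 => id
  | m + 1 => A ∘ altComp B A m

/-- The sign of a real number, as an integer (with `sgnZ 0 = 0`). -/
def sgnZ (x : ℝ) : ℤ := if 0 < x then 1 else if x < 0 then -1 else 0

/-- The function `v(x) = (1-t²)∫₀ˣ dy/(1-2t cos y+t²)`. -/
def mvfun (t x : ℝ) : ℝ :=
  (1 - t ^ 2) * ∫ y in (0:ℝ)..x, 1 / (1 - 2 * t * Real.cos y + t ^ 2)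

section AffineOps

variable {V : Type*} [NormedAddCommGroup V] [InnerProductSpace ℝ V]

/-- The coroot `α∨ = 2α/⟨α,α⟩`. -/
def coroot (α : V) : V := (2 / ⟪α, α⟫) • α

/-- The affine root `a = α∨ + r c` (encoded as the pair `(α, r)`), as an affine
function on `V`. -/
def aval (c : ℝ) (a : V × ℤ) (x : V) : ℝ := ⟪x, coroot a.1⟫ + a.2 * c

/-- The affine reflection `s_a(x) = x - a(x) α` attached to `a = α∨ + r c`. -/
def sAff (c : ℝ) (a : V × ℤ) (x : V) : V := x - aval c a x • a.1

/-- `w` maps the affine root `a` to the affine root `b`, i.e. `(wa)(x) = a(w⁻¹x) = b(x)`. -/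
def mapsRoot (c : ℝ) (w : Equiv.Perm V) (a b : V × ℤ) : Prop :=
  ∀ x : V, aval c a (w⁻¹ x) = aval c b x

/-- The linear part `w′` of an affine transformation `w`. -/
def linPart (w : Equiv.Perm V) (x : V) : V := w x - w 0

variable {R : Type*} [Field R]

/-- The difference-reflection operator `T̂_a`. -/
def hatT (c : ℝ) (τ : V × ℤ → R) (a : V × ℤ) (f : V → R) (x : V) : R :=
  if 0 < aval c a x then τ a * f (sAff c a x)
  else if aval c a x = 0 then τ a * f x
  else (τ a)⁻¹ * f (sAff c a x) + (τ a - (τ a)⁻¹) * f x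

/-- The discrete integral operator `J_a`. -/
def Jop (c : ℝ) (a : V × ℤ) (f : V → R) (x : V) : R :=
  if 0 < aval c a x then
    - ∑ k ∈ Finset.Icc (1 : ℤ) ⌊aval c a x⌋, f (x - k • a.1)
  else if aval c a x = 0 then 0
  else ∑ k ∈ Finset.Ico (0 : ℤ) (-⌊aval c a x⌋), f (x + k • a.1)

/-- The integral-reflection operator `I_a = τ_a s_a + (τ_a - τ_a⁻¹) J_a`. -/
def Iop (c : ℝ) (τ : V × ℤ → R) (a : V × ℤ) (f : V → R) (x : V) : R :=
  τ a * f (sAff c a x) + (τ a - (τ a)⁻¹) * Jop c a f x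

end AffineOps

/-- An irreducible reduced crystallographic root system spanning `V`, together with a
choice of positive roots, simple roots, and the highest short root. -/
structure RootSystemData (V : Type*) [NormedAddCommGroup V] [InnerProductSpace ℝ V] :
    Type _ where
  n : ℕ
  n_pos : 1 ≤ n
  rank_eq : Module.finrank ℝ V = n
  R0 : Finset V
  ne_zero : ∀ α ∈ R0, α ≠ (0 : V)
  span_top : Submodule.span ℝ (R0 : Set V) = ⊤
  reduced : ∀ α ∈ R0, ∀ t : ℝ, t • α ∈ R0 → t = 1 ∨ t = -1
  crystallographic : ∀ α ∈ R0, ∀ β ∈ R0, ∃ k : ℤ, ⟪β, coroot α⟫ = (k : ℝ)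
  reflect_mem : ∀ α ∈ R0, ∀ β ∈ R0, β - ⟪β, coroot α⟫ • α ∈ R0
  irreducible : ∀ S : Finset V, S ⊆ R0 →
      (∀ a ∈ S, ∀ b ∈ R0, b ∉ S → ⟪a, b⟫ = 0) → S = ∅ ∨ S = R0
  pos : Finset V
  pos_subset : pos ⊆ R0
  pos_or_neg : ∀ α ∈ R0, α ∈ pos ∨ -α ∈ pos
  pos_not_both : ∀ α ∈ pos, -α ∉ pos
  pos_add : ∀ α ∈ pos, ∀ β ∈ pos, α + β ∈ R0 → α + β ∈ pos
  simpleRoot : Fin n → V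
  simpleRoot_mem : ∀ j, simpleRoot j ∈ pos
  pos_natCombo : ∀ α ∈ pos, ∃ k : Fin n → ℕ, α = ∑ j, (k j : ℝ) • simpleRoot j
  hshort : V
  hshort_mem : hshort ∈ pos
  hshort_short : ∀ α ∈ R0, ‖hshort‖ ≤ ‖α‖
  hshort_highest : ∀ α ∈ R0, ‖α‖ = ‖hshort‖ →
      ∃ k : Fin n → ℕ, hshort - α = ∑ j, (k j : ℝ) • simpleRoot j

namespace RootSystemData

variable {V : Type*} [NormedAddCommGroup V] [InnerProductSpace ℝ V]
variable (D : RootSystemData V)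

/-- The weight lattice `P`. -/
def weightLattice : Set V :=
  {x : V | ∀ α ∈ D.R0, ∃ k : ℤ, ⟪x, coroot α⟫ = (k : ℝ)}

/-- The root lattice `Q`. -/
def rootLattice : Set V := (Submodule.span ℤ (D.R0 : Set V) : Set V)

/-- The coweight lattice `P∨`. -/
def coweightLattice : Set V :=
  {x : V | ∀ α ∈ D.R0, ∃ k : ℤ, ⟪x, α⟫ = (k : ℝ)}

/-- The dominant cone. -/
def dominant : Set V := {x : V | ∀ α ∈ D.pos, 0 ≤ ⟪x, coroot α⟫}

/-- `ω` is a minuscule (dominant) weight. -/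
def IsMinuscule (ω : V) : Prop :=
  ω ∈ D.weightLattice ∧ ω ∈ D.dominant ∧ ω ≠ 0 ∧
    ∀ α ∈ D.pos, ⟪ω, coroot α⟫ ≤ 1

/-- `ω` is the quasi-minuscule weight, i.e. the highest short root. -/
def IsQuasiMinuscule (ω : V) : Prop := ω = D.hshort

/-- The saturated set `P_ϑ` containing the (quasi-)minuscule weights. -/
def Ptheta : Set V :=
  {ν : V | ν ∈ D.weightLattice ∧ ∀ α ∈ D.R0, α ≠ ν → |⟪ν, coroot α⟫| ≤ 1}

/-- Half sum of the positive roots. -/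
def rhoHalf : V := (2⁻¹ : ℝ) • ∑ α ∈ D.pos, α

/-- Half sum of the positive coroots. -/
def rhoVee : V := (2⁻¹ : ℝ) • ∑ α ∈ D.pos, coroot α

/-- `(α, r)` encodes an affine root. -/
def IsAffRoot (a : V × ℤ) : Prop := a.1 ∈ D.R0

/-- `(α, r)` encodes a positive affine root. -/
def IsAffPos (a : V × ℤ) : Prop :=
  a.1 ∈ D.R0 ∧ (1 ≤ a.2 ∨ (a.2 = 0 ∧ a.1 ∈ D.pos))

/-- `(α, r)` encodes a negative affine root. -/
def IsAffNeg (a : V × ℤ) : Prop := D.IsAffPos (-a.1, -a.2)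

/-- The simple affine roots `a₀ = -ϑ∨ + c`, `a_j = α_j∨`. -/
def aSimple (j : Fin (D.n + 1)) : V × ℤ :=
  Fin.cons (α := fun _ => V × ℤ) (-D.hshort, (1 : ℤ))
    (fun i => (D.simpleRoot i, (0 : ℤ))) j

/-- The reflections generating the finite Weyl group `W₀`. -/
def W0Gens : Set (Equiv.Perm V) :=
  {e | ∃ α ∈ D.R0, ∀ x, e x = x - ⟪x, coroot α⟫ • α}

/-- The finite Weyl group `W₀`. -/
def W0 : Subgroup (Equiv.Perm V) := Subgroup.closure D.W0Gens

variable (c : ℝ)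

/-- The affine reflections generating the affine Weyl group `W_R`. -/
def AffGens : Set (Equiv.Perm V) :=
  {e | ∃ a : V × ℤ, D.IsAffRoot a ∧ ∀ x, e x = sAff c a x}

/-- The affine Weyl group `W_R`. -/
def WR : Subgroup (Equiv.Perm V) := Subgroup.closure (D.AffGens c)

/-- The translations `t_{cλ}`, `λ ∈ P`. -/
def TransGens : Set (Equiv.Perm V) :=
  {e | ∃ lam ∈ D.weightLattice, ∀ x : V, e x = x + c • lam}

/-- The extended affine Weyl group `W = W₀ ⋉ t(cP)`. -/
def Wext : Subgroup (Equiv.Perm V) :=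
  Subgroup.closure (D.AffGens c ∪ D.TransGens c)

/-- The set `R(w) = R⁺ ∩ w⁻¹(R⁻)`. -/
def RW (w : Equiv.Perm V) : Set (V × ℤ) :=
  {a | D.IsAffPos a ∧ ∃ b : V × ℤ, D.IsAffNeg b ∧ mapsRoot c w a b}

/-- The length `ℓ(w) = #R(w)`. -/
def len (w : Equiv.Perm V) : ℕ := (D.RW c w).ncard

/-- The closed fundamental alcove `A_c`. -/
def alcove : Set V := {x | ∀ a : V × ℤ, D.IsAffPos a → 0 ≤ aval c a x}

/-- `wmin x` is the unique shortest element of the affine Weyl group mapping `x` into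
the fundamental alcove. -/
def IsWmin (wmin : V → Equiv.Perm V) : Prop :=
  ∀ x : V, wmin x ∈ D.WR c ∧ (wmin x) x ∈ D.alcove c ∧
    ∀ w ∈ D.WR c, w x ∈ D.alcove c → D.len c (wmin x) < D.len c w ∨ w = wmin x

/-- One step in the Bruhat order: `w < w s_a` whenever `ℓ(w) < ℓ(w s_a)`. -/
def bruhatStep (w w' : Equiv.Perm V) : Prop :=
  ∃ a : V × ℤ, D.IsAffPos a ∧ ∃ e : Equiv.Perm V,
    (∀ x, e x = sAff c a x) ∧ w' = w * e ∧ D.len c w < D.len c w'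

/-- The Bruhat order on the affine Weyl group. -/
def bruhatLE (w w' : Equiv.Perm V) : Prop :=
  Relation.ReflTransGen (D.bruhatStep c) w w'

/-- The partial order on `V`: `x ≤ y` iff `x₊ = y₊` and `w_x ≤ w_y` (Bruhat). -/
def vle (wmin : V → Equiv.Perm V) (x y : V) : Prop :=
  (wmin x) x = (wmin y) y ∧ D.bruhatLE c (wmin x) (wmin y)

/-- The interval `[x, y]` for the order `vle`. -/
def vInterval (wmin : V → Equiv.Perm V) (x y : V) : Set V :=
  {z : V | D.vle c wmin x z ∧ D.vle c wmin z y}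

/-- The partial order `⪯` on the weight lattice:
`μ ⪯ λ` iff `λ - μ ∈ Q` and `Conv [μ₊, μ] ⊆ Conv [λ₊, λ]`. -/
def pleq (wmin : V → Equiv.Perm V) (μ lam : V) : Prop :=
  lam - μ ∈ D.rootLattice ∧
    convexHull ℝ (D.vInterval c wmin ((wmin μ) μ) μ)
      ⊆ convexHull ℝ (D.vInterval c wmin ((wmin lam) lam) lam)

section Ops

variable {R : Type*} [Field R]

/-- `τ` is a multiplicity function: nonvanishing on affine roots, and invariant
under the (extended affine) Weyl group action on the affine roots. -/
def IsMultiplicity (τ : V × ℤ → R) : Prop :=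
  (∀ a : V × ℤ, D.IsAffRoot a → τ a ≠ 0) ∧
    ∀ w ∈ D.Wext c, ∀ a b : V × ℤ, D.IsAffRoot a → D.IsAffRoot b →
      mapsRoot c w a b → τ a = τ b

/-- `τ_w = ∏_{a ∈ R(w)} τ_a`. -/
def tauw (τ : V × ℤ → R) (w : Equiv.Perm V) : R := ∏ᶠ a ∈ D.RW c w, τ a

/-- `τ₀`, the multiplicity of the affine simple root `a₀`. -/
def tauZero (τ : V × ℤ → R) : R := τ (-D.hshort, (1 : ℤ))

/-- The operator `I_{j₁} ∘ ⋯ ∘ I_{jℓ}` attached to a word in the simple reflections. -/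
def wordOp (τ : V × ℤ → R) (l : List (Fin (D.n + 1))) : (V → R) → V → R :=
  (l.map fun j => Iop c τ (D.aSimple j)).foldr (· ∘ ·) id

/-- `l` is a reduced word for `w`, i.e. `w = s_{j₁} ∘ ⋯ ∘ s_{jℓ}` with `ℓ = ℓ(w)`. -/
def IsReducedWord (w : Equiv.Perm V) (l : List (Fin (D.n + 1))) : Prop :=
  l.length = D.len c w ∧
    ∀ x : V, w x = ((l.map fun j => sAff c (D.aSimple j)).foldr (· ∘ ·) id) x

/-- `e∨_τ(η) = ∏_{α ∈ R₀⁺} τ_{α∨}^{⟨η,α∨⟩}`. -/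
def etau (τ : V × ℤ → R) (η : V) : R :=
  ∏ α ∈ D.pos, τ (α, (0 : ℤ)) ^ ⌊⟪η, coroot α⟫⌋

/-- `h∨_τ = τ₀² e∨_τ(ϑ)`. -/
def hvee (τ : V × ℤ → R) : R := D.tauZero τ ^ 2 * D.etau τ D.hshort

/-- `θ(μ) = #{b ∈ R(w_μ) : b(μ) = -2}`. -/
def theta (wmin : V → Equiv.Perm V) (μ : V) : ℕ :=
  {b : V × ℤ | b ∈ D.RW c (wmin μ) ∧ aval c b μ = -2}.ncard

/-- The coefficient `c_{λ,η} = θ(λ-η) e∨_τ(η) (h∨_τ)^{-sign⟨λ,η∨⟩}`. -/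
def ccoef (τ : V × ℤ → R) (wmin : V → Equiv.Perm V) (lam η : V) : R :=
  (D.theta c wmin (lam - η) : R) * D.etau τ η *
    D.hvee τ ^ (-sgnZ ⟪lam, coroot η⟫)

/-- The coefficient `a_{λ,ν} = τ_{w_{w_λ(λ-ν)}} τ_{w_{w_λ(λ-ν)} w_λ} τ_{w_λ}⁻¹`. -/
def acoef (τ : V × ℤ → R) (wmin : V → Equiv.Perm V) (lam ν : V) : R :=
  D.tauw c τ (wmin ((wmin lam) (lam - ν))) *
    D.tauw c τ (wmin ((wmin lam) (lam - ν)) * wmin lam) *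
    (D.tauw c τ (wmin lam))⁻¹

/-- The coefficient `b_{λ,ν}`. -/
def bcoef (τ : V × ℤ → R) (wmin : V → Equiv.Perm V) (lam ν : V) : R :=
  if (wmin (lam - ν)) (lam - ν) = (wmin lam) lam then
    D.tauw c τ (wmin ((wmin lam) (lam - ν))) ^ 2 *
      (if D.IsAffNeg (ν, ⌊(1 - ⟪lam, coroot ν⟫) / c⌋) then 1 else 0)
  else D.ccoef c τ wmin ((wmin lam) lam) (linPart (wmin lam) ν)

/-- The intertwining operator `(𝒥f)(λ) = τ_{w_λ}⁻¹ (I_{w_λ} f)(λ₊)`, where `Iw` assigns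
to each `w_λ` the composite of integral-reflection operators along a reduced word. -/
def Jcal (τ : V × ℤ → R) (wmin : V → Equiv.Perm V)
    (Iw : Equiv.Perm V → (V → R) → V → R) (f : V → R) (x : V) : R :=
  (D.tauw c τ (wmin x))⁻¹ * Iw (wmin x) f ((wmin x) x)

end Ops

/-- The Yang–Yang type Morse function `𝒱_μ`. -/
def morse (t : V → ℝ) (μ ξ : V) : ℝ :=
  (c / 2) * ⟪ξ, ξ⟫ - 2 * Real.pi * ⟪D.rhoVee + μ, ξ⟫ +
    ∑ α ∈ D.pos, (2 / ⟪α, α⟫) * ∫ x in (0:ℝ)..(⟪ξ, α⟫), mvfun (t α) x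

/-- The critical equation `cξ + ∑_{α>0} v_α(⟨ξ,α⟩) α∨ = 2π(ρ∨+μ)`. -/
def criticalEq (t : V → ℝ) (μ ξ : V) : Prop :=
  c • ξ + ∑ α ∈ D.pos, mvfun (t α) ⟪ξ, α⟫ • coroot α
    = (2 * Real.pi) • (D.rhoVee + μ)

/-- The Hessian bilinear form `H_{η,ζ}(ξ)`. -/
def hessForm (t : V → ℝ) (ξ η ζ : V) : ℝ :=
  c * ⟪η, ζ⟫ + ∑ α ∈ D.R0,
    (1 - t α ^ 2) * ⟪η, α⟫ * ⟪ζ, α⟫ /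
      (⟪α, α⟫ * (1 - 2 * t α * Real.cos ⟪ξ, α⟫ + t α ^ 2))

/-- `κ_± = (2/n) ∑_{α>0} (1-t_α²)/(1 ± |t_α|)²`; here `s = ±1`. -/
def kappaPM (t : V → ℝ) (s : ℝ) : ℝ :=
  (2 / (D.n : ℝ)) * ∑ α ∈ D.pos, (1 - t α ^ 2) / (1 + s * |t α|) ^ 2

end RootSystemData

/-!
Fix a point `p` in the interior of the fundamental alcove. The length of `w` is the number
of hyperplanes separating `p` from `w⁻¹ p`, and `[x₊, x]` is the set of points reached from `x` by
*downward* reflections: those in positive affine roots that are negative at the current point. A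
downward reflection brings the point closer to `p`, so `x` is strictly farther from `p` than the
rest of `Conv [x₊, x]`; moreover this polytope contains `Conv [y₊, y]` for each of its points `y`,
and it is stable under `s_j` whenever `a_j(x) < 0`. As the root lattice is discrete, only finitely
many weights lie in the polytope.

The operator `I_j` expresses its value at `y` through the values of `f` on the segment
`[y, s_j y]`. If `a_j(x) < 0` and `y` runs over `Conv [x₊, s_j x]`, these segments stay inside
`Conv [x₊, x]`, and since `x` is its strictly farthest point, `x` lies on such a segment only for
`y = s_j x`. There the coefficient of `f x` is `τ_j - (τ_j - τ_j⁻¹) = τ_j⁻¹`. Induction along a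
reduced word of `w_x` therefore gives a triangular expansion of `I_{w_x}` with diagonal coefficient
`τ_{w_x}⁻¹`, and the normalisation of `𝒥` contributes another such factor.
-/

section AffineReflections

variable {V : Type*} [NormedAddCommGroup V] [InnerProductSpace ℝ V]

lemma inner_coroot (x α : V) : ⟪x, coroot α⟫ = 2 / ⟪α, α⟫ * ⟪x, α⟫ :=
  real_inner_smul_right _ _ _

lemma inner_coroot_self {α : V} (hα : α ≠ 0) : ⟪α, coroot α⟫ = 2 := by
  rw [inner_coroot, div_mul_cancel₀ _ (inner_self_ne_zero.2 hα)]

lemma coroot_neg (α : V) : coroot (-α) = -coroot α := by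
  simp [coroot]

lemma inner_coroot_pos {x α : V} (h : 0 < ⟪x, α⟫) : 0 < ⟪x, coroot α⟫ := by
  have hα : α ≠ 0 := by
    rintro rfl
    simp at h
  have := real_inner_self_pos.2 hα
  rw [inner_coroot]
  positivity

lemma inner_coroot_mul_comm (α β : V) :
    ⟪β, coroot α⟫ * ⟪α, α⟫ = ⟪α, coroot β⟫ * ⟪β, β⟫ := by
  rcases eq_or_ne α 0 with rfl | hα
  · simp
  rcases eq_or_ne β 0 with rfl | hβ
  · simp
  have := real_inner_self_pos.2 hα
  have := real_inner_self_pos.2 hβ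
  rw [inner_coroot, inner_coroot, real_inner_comm α β]
  field_simp

lemma norm_sub_inner_coroot_smul (α β : V) : ‖β - ⟪β, coroot α⟫ • α‖ = ‖β‖ := by
  rcases eq_or_ne α 0 with rfl | hα
  · simp
  have := real_inner_self_pos.2 hα
  rw [← sq_eq_sq₀ (norm_nonneg _) (norm_nonneg _), norm_sub_sq_real, norm_smul, mul_pow,
    inner_smul_right, Real.norm_eq_abs, sq_abs, ← real_inner_self_eq_norm_sq α, inner_coroot]
  field_simp
  ring

lemma coroot_sub_inner_coroot_smul (α β : V) :
    coroot (β - ⟪β, coroot α⟫ • α) = coroot β - ⟪α, coroot β⟫ • coroot α := by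
  conv_lhs => rw [coroot, real_inner_self_eq_norm_sq, norm_sub_inner_coroot_smul,
    ← real_inner_self_eq_norm_sq, smul_sub, smul_smul]
  rw [inner_coroot, inner_coroot, coroot, coroot, smul_smul, real_inner_comm α β]
  congr 2
  ring

lemma inner_coroot_sub_inner_coroot_smul {α : V} (hα : α ≠ 0) (β : V) :
    ⟪α, coroot (β - ⟪β, coroot α⟫ • α)⟫ = -⟪α, coroot β⟫ := by
  rw [coroot_sub_inner_coroot_smul, inner_sub_right, real_inner_smul_right, inner_coroot_self hα]
  ring

variable (c : ℝ) (a b : V × ℤ) (x y : V)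

lemma aval_neg : aval c (-a.1, -a.2) x = -aval c a x := by
  simp only [aval, coroot_neg, inner_neg_right]
  push_cast
  ring

lemma aval_sub_smul (v : V) (t : ℝ) :
    aval c a (x - t • v) = aval c a x - t * ⟪v, coroot a.1⟫ := by
  rw [aval, inner_sub_left, real_inner_smul_left, aval]
  ring

lemma aval_combo {s t : ℝ} (h : s + t = 1) :
    aval c a (s • x + t • y) = s * aval c a x + t * aval c a y := by
  obtain rfl := eq_sub_of_add_eq' h
  simp only [aval, inner_add_left, real_inner_smul_left]
  ring

lemma sAff_combo {s t : ℝ} (h : s + t = 1) :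
    sAff c a (s • x + t • y) = s • sAff c a x + t • sAff c a y := by
  rw [sAff, aval_combo c a x y h, sAff, sAff]
  module

lemma aval_sAff : aval c b (sAff c a x) = aval c b x - aval c a x * ⟪a.1, coroot b.1⟫ :=
  aval_sub_smul c b x a.1 _

variable {a x} in
lemma aval_sAff_self (ha : a.1 ≠ 0) : aval c a (sAff c a x) = -aval c a x := by
  rw [aval_sAff, inner_coroot_self ha]
  ring

lemma sAff_sAff : sAff c a (sAff c a x) = x := by
  rcases eq_or_ne a.1 0 with ha | ha
  · simp [sAff, ha]
  · rw [sAff, aval_sAff_self c ha, sAff]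
    module

/-- The affine reflection `s_a` as a permutation of `V`. -/
def affRefl : Equiv.Perm V :=
  Function.Involutive.toPerm (sAff c a) (sAff_sAff c a)

@[simp] lemma affRefl_apply : affRefl c a x = sAff c a x := rfl

@[simp] lemma affRefl_inv : (affRefl c a)⁻¹ = affRefl c a := rfl

@[simp] lemma affRefl_mul_self : affRefl c a * affRefl c a = 1 :=
  Equiv.ext (sAff_sAff c a)

variable {c a x} in
lemma sAff_eq_self (h : aval c a x = 0) : sAff c a x = x := by
  rw [sAff, h, zero_smul, sub_zero]

variable {c a x} in
/-- The line through `x` and `s_a x` is orthogonal to the wall of `a`, on whose positive side `p`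
lies. -/
lemma norm_sAff_sub_lt {p : V} (hp : 0 < aval c a p) (hx : aval c a x < 0) :
    ‖sAff c a x - p‖ < ‖x - p‖ := by
  set m := aval c a x
  have hpx : ⟪x - p, coroot a.1⟫ = m - aval c a p := by
    simp only [m, aval, inner_sub_left]
    ring
  have ha : a.1 ≠ 0 := by
    intro ha
    simp only [ha, coroot, smul_zero, inner_zero_right] at hpx
    linarith
  have hα := real_inner_self_pos.2 ha
  rw [inner_coroot, div_mul_eq_mul_div, div_eq_iff hα.ne'] at hpx
  have hsub : sAff c a x - p = (x - p) - m • a.1 := by rw [sAff]; abel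
  rw [← sq_lt_sq₀ (norm_nonneg _) (norm_nonneg _), hsub, norm_sub_sq_real, norm_smul, mul_pow,
    inner_smul_right, Real.norm_eq_abs, sq_abs, ← real_inner_self_eq_norm_sq a.1]
  nlinarith [mul_pos (mul_pos hp (neg_pos.2 hx)) hα]

end AffineReflections

namespace RootSystemData

variable {V : Type*} [NormedAddCommGroup V] [InnerProductSpace ℝ V] {D : RootSystemData V} {c : ℝ}

section AffineRoots

lemma neg_mem_R0 {α : V} (hα : α ∈ D.R0) : -α ∈ D.R0 := by
  have h := D.reflect_mem α hα α hα
  rwa [inner_coroot_self (D.ne_zero α hα), two_smul, sub_add_cancel_left] at h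

lemma IsAffRoot.neg {a : V × ℤ} (ha : D.IsAffRoot a) : D.IsAffRoot (-a.1, -a.2) :=
  neg_mem_R0 ha

lemma isAffPos_or_isAffNeg {a : V × ℤ} (ha : D.IsAffRoot a) : D.IsAffPos a ∨ D.IsAffNeg a := by
  rcases lt_trichotomy a.2 0 with hr | hr | hr
  · exact Or.inr ⟨neg_mem_R0 ha, Or.inl (by dsimp only; omega)⟩
  · rcases D.pos_or_neg a.1 ha with h | h
    · exact Or.inl ⟨ha, Or.inr ⟨hr, h⟩⟩
    · exact Or.inr ⟨neg_mem_R0 ha, Or.inr ⟨by simp [hr], h⟩⟩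
  · exact Or.inl ⟨ha, Or.inl hr⟩

/-- The affine root `s_a b`, i.e. the one with `(s_a b)(x) = b(s_a x)` when `a` and `b` are affine
roots. The floor only turns the integer `⟨α, β∨⟩` into an element of `ℤ`. -/
def reflRoot (a b : V × ℤ) : V × ℤ :=
  (b.1 - ⟪b.1, coroot a.1⟫ • a.1, b.2 - a.2 * ⌊⟪a.1, coroot b.1⟫⌋)

lemma IsAffRoot.reflRoot {a b : V × ℤ} (ha : D.IsAffRoot a) (hb : D.IsAffRoot b) :
    D.IsAffRoot (reflRoot a b) :=
  D.reflect_mem _ ha _ hb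

lemma IsAffRoot.floor_inner_coroot {a b : V × ℤ} (ha : D.IsAffRoot a) (hb : D.IsAffRoot b) :
    (⌊⟪a.1, coroot b.1⟫⌋ : ℝ) = ⟪a.1, coroot b.1⟫ := by
  obtain ⟨k, hk⟩ := D.crystallographic b.1 hb a.1 ha
  rw [hk, Int.floor_intCast]

lemma aval_reflRoot {a b : V × ℤ} (ha : D.IsAffRoot a) (hb : D.IsAffRoot b) (x : V) :
    aval c (reflRoot a b) x = aval c b (sAff c a x) := by
  rw [aval_sAff, aval, reflRoot, coroot_sub_inner_coroot_smul, inner_sub_right,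
    real_inner_smul_right, Int.cast_sub, Int.cast_mul, ha.floor_inner_coroot hb, aval, aval]
  ring

lemma reflRoot_reflRoot {a b : V × ℤ} (ha : D.IsAffRoot a) (hb : D.IsAffRoot b) :
    reflRoot a (reflRoot a b) = b := by
  have hα : a.1 ≠ 0 := D.ne_zero _ ha
  have hfloor : ⌊⟪a.1, coroot (reflRoot a b).1⟫⌋ = -⌊⟪a.1, coroot b.1⟫⌋ := by
    obtain ⟨k, hk⟩ := D.crystallographic b.1 hb a.1 ha
    rw [reflRoot, inner_coroot_sub_inner_coroot_smul hα, hk, ← Int.cast_neg, Int.floor_intCast,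
      Int.floor_intCast]
  refine Prod.ext ?_ ?_
  · rw [reflRoot, reflRoot, inner_sub_left, real_inner_smul_left, inner_coroot_self hα]
    module
  · rw [reflRoot, hfloor, reflRoot]
    ring

lemma sAff_reflRoot {a b : V × ℤ} (ha : D.IsAffRoot a) (hb : D.IsAffRoot b) (x : V) :
    sAff c (reflRoot a b) (sAff c a x) = sAff c a (sAff c b x) := by
  rw [sAff, aval_reflRoot ha hb, sAff_sAff]
  rw [sAff, sAff, sAff, aval_sub_smul, reflRoot]
  module

lemma affRefl_mem_WR {a : V × ℤ} (ha : D.IsAffRoot a) : affRefl c a ∈ D.WR c :=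
  Subgroup.subset_closure ⟨a, ha, fun _ => rfl⟩

end AffineRoots

section SimpleRoots

lemma finiteDimensional (D : RootSystemData V) : FiniteDimensional ℝ V :=
  Module.finite_of_finrank_pos (D.rank_eq ▸ D.n_pos)

lemma span_simpleRoot (D : RootSystemData V) :
    Submodule.span ℝ (Set.range D.simpleRoot) = ⊤ := by
  have hpos : ∀ α ∈ D.pos, α ∈ Submodule.span ℝ (Set.range D.simpleRoot) := by
    intro α hα
    obtain ⟨k, rfl⟩ := D.pos_natCombo α hα
    exact Submodule.sum_mem _ fun j _ => Submodule.smul_mem _ _ (Submodule.subset_span ⟨j, rfl⟩)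
  rw [eq_top_iff, ← D.span_top, Submodule.span_le]
  intro α hα
  rcases D.pos_or_neg α hα with h | h
  · exact hpos α h
  · exact neg_mem_iff.1 (hpos _ h)

/-- The simple roots as a basis of `V`. -/
def simpleBasis (D : RootSystemData V) : Module.Basis (Fin D.n) ℝ V :=
  basisOfTopLeSpanOfCardEqFinrank D.simpleRoot D.span_simpleRoot.ge (by simp [D.rank_eq])

@[simp] lemma simpleBasis_apply (j : Fin D.n) : D.simpleBasis j = D.simpleRoot j := by
  simp [simpleBasis]

lemma simpleBasis_repr_natCombo (k : Fin D.n → ℕ) (i : Fin D.n) :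
    D.simpleBasis.repr (∑ j, (k j : ℝ) • D.simpleRoot j) i = k i := by
  simp only [← simpleBasis_apply, Module.Basis.repr_sum_self]

lemma simpleBasis_repr_nonneg {α : V} (hα : α ∈ D.pos) (i : Fin D.n) :
    0 ≤ D.simpleBasis.repr α i := by
  obtain ⟨k, rfl⟩ := D.pos_natCombo α hα
  rw [simpleBasis_repr_natCombo]
  exact Nat.cast_nonneg _

lemma exists_simpleBasis_repr_pos {α : V} (hα : α ∈ D.pos) :
    ∃ i, 0 < D.simpleBasis.repr α i := by
  by_contra! h
  refine D.ne_zero α (D.pos_subset hα) (D.simpleBasis.ext_elem fun i => ?_)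
  simpa using (h i).antisymm (simpleBasis_repr_nonneg hα i)

lemma mem_pos_of_simpleBasis_repr_pos {α : V} (hα : α ∈ D.R0) {i : Fin D.n}
    (hi : 0 < D.simpleBasis.repr α i) : α ∈ D.pos := by
  refine (D.pos_or_neg α hα).resolve_right fun hneg => ?_
  have := simpleBasis_repr_nonneg hneg i
  rw [map_neg, Finsupp.neg_apply] at this
  linarith

lemma reflect_simpleRoot_mem_pos {β : V} (hβ : β ∈ D.pos) {i : Fin D.n}
    (hne : β ≠ D.simpleRoot i) :
    β - ⟪β, coroot (D.simpleRoot i)⟫ • D.simpleRoot i ∈ D.pos := by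
  have hi := D.pos_subset (D.simpleRoot_mem i)
  obtain ⟨i', hi', hpos⟩ : ∃ i', i' ≠ i ∧ 0 < D.simpleBasis.repr β i' := by
    by_contra! h
    have hβi : β = D.simpleBasis.repr β i • D.simpleRoot i := by
      conv_lhs => rw [← D.simpleBasis.sum_repr β]
      rw [Finset.sum_eq_single i (fun j _ hj => ?_) (by simp), simpleBasis_apply]
      rw [(h j hj).antisymm (simpleBasis_repr_nonneg hβ j), zero_smul]
    rcases D.reduced _ hi _ (hβi ▸ D.pos_subset hβ) with h1 | h1
    · exact hne (by rw [hβi, h1, one_smul])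
    · linarith [simpleBasis_repr_nonneg hβ i]
  refine mem_pos_of_simpleBasis_repr_pos (i := i') (D.reflect_mem _ hi _ (D.pos_subset hβ)) ?_
  rw [← simpleBasis_apply]
  simpa only [map_sub, map_smul, Module.Basis.repr_self, Finsupp.sub_apply, Finsupp.smul_apply,
    Finsupp.single_eq_of_ne hi', smul_zero, sub_zero] using hpos

lemma exists_regular_dominant (D : RootSystemData V) : ∃ δ : V, ∀ α ∈ D.pos, 0 < ⟪δ, α⟫ := by
  have := D.finiteDimensional
  have := FiniteDimensional.complete ℝ V
  let height : V →ₗ[ℝ] ℝ := ∑ j, D.simpleBasis.coord j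
  refine ⟨(InnerProductSpace.toDual ℝ V).symm (LinearMap.toContinuousLinearMap height),
    fun α hα => ?_⟩
  rw [InnerProductSpace.toDual_symm_apply]
  obtain ⟨i, hi⟩ := exists_simpleBasis_repr_pos hα
  have : 0 < ∑ j, D.simpleBasis.repr α j :=
    Finset.sum_pos' (fun j _ => simpleBasis_repr_nonneg hα j) ⟨i, Finset.mem_univ i, hi⟩
  simpa [height] using this

lemma hshort_mem_R0 (D : RootSystemData V) : D.hshort ∈ D.R0 :=
  D.pos_subset D.hshort_mem

/-- `ϑ` and its reflection are short, so their difference `⟨ϑ, β∨⟩ β` is a nonnegative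
combination of simple roots. -/
lemma inner_hshort_coroot_nonneg {β : V} (hβ : β ∈ D.pos) : 0 ≤ ⟪D.hshort, coroot β⟫ := by
  have hs := D.hshort_mem_R0
  obtain ⟨k, hk⟩ := D.hshort_highest _ (D.reflect_mem _ (D.pos_subset hβ) _ hs)
    (norm_sub_inner_coroot_smul β D.hshort)
  rw [sub_sub_cancel] at hk
  obtain ⟨i, hi⟩ := exists_simpleBasis_repr_pos hβ
  have hcoord := simpleBasis_repr_natCombo k i
  rw [← hk, map_smul, Finsupp.smul_apply, smul_eq_mul] at hcoord
  exact nonneg_of_mul_nonneg_left (hcoord ▸ Nat.cast_nonneg _) hi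

lemma mem_pos_of_inner_hshort_coroot_pos {β : V} (hβ : β ∈ D.R0)
    (h : 0 < ⟪D.hshort, coroot β⟫) : β ∈ D.pos := by
  refine (D.pos_or_neg β hβ).resolve_right fun hneg => ?_
  have h0 := inner_hshort_coroot_nonneg hneg
  rw [coroot_neg, inner_neg_right] at h0
  linarith

lemma reflect_hshort_mem_pos {β : V} (hβ : β ∈ D.R0) (h : ⟪D.hshort, coroot β⟫ < 0) :
    β - ⟪β, coroot D.hshort⟫ • D.hshort ∈ D.pos := by
  refine mem_pos_of_inner_hshort_coroot_pos (D.reflect_mem _ D.hshort_mem_R0 _ hβ) ?_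
  rw [inner_coroot_sub_inner_coroot_smul (D.ne_zero _ D.hshort_mem_R0)]
  linarith

lemma neg_two_lt_inner_hshort_coroot {β : V} (hβ : β ∈ D.R0) (hne : β ≠ -D.hshort) :
    -2 < ⟪D.hshort, coroot β⟫ := by
  have hβpos := real_inner_self_pos.2 (D.ne_zero β hβ)
  have hsum : 0 < ⟪D.hshort + β, D.hshort + β⟫ :=
    real_inner_self_pos.2 fun h => hne (eq_neg_of_add_eq_zero_right h)
  have hshort : ⟪D.hshort, D.hshort⟫ ≤ ⟪β, β⟫ := by
    rw [real_inner_self_eq_norm_sq, real_inner_self_eq_norm_sq]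
    exact pow_le_pow_left₀ (norm_nonneg _) (D.hshort_short β hβ) 2
  rw [real_inner_add_add_self] at hsum
  rw [inner_coroot, div_mul_eq_mul_div, lt_div_iff₀ hβpos]
  linarith

@[simp] lemma aSimple_zero (D : RootSystemData V) : D.aSimple 0 = (-D.hshort, 1) := rfl

@[simp] lemma aSimple_succ (i : Fin D.n) : D.aSimple i.succ = (D.simpleRoot i, 0) := rfl

lemma isAffPos_aSimple (D : RootSystemData V) (j : Fin (D.n + 1)) : D.IsAffPos (D.aSimple j) := by
  cases j using Fin.cases with
  | zero => exact ⟨neg_mem_R0 D.hshort_mem_R0, Or.inl le_rfl⟩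
  | succ i => exact ⟨D.pos_subset (D.simpleRoot_mem i), Or.inr ⟨rfl, D.simpleRoot_mem i⟩⟩

lemma isAffRoot_aSimple (D : RootSystemData V) (j : Fin (D.n + 1)) : D.IsAffRoot (D.aSimple j) :=
  (D.isAffPos_aSimple j).1

lemma isAffPos_reflRoot_simpleRoot (i : Fin D.n) {b : V × ℤ} (hb : D.IsAffPos b)
    (hne : b ≠ (D.simpleRoot i, 0)) : D.IsAffPos (reflRoot (D.simpleRoot i, 0) b) := by
  refine ⟨(D.isAffRoot_aSimple i.succ).reflRoot hb.1, ?_⟩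
  have hlevel : (reflRoot (D.simpleRoot i, 0) b).2 = b.2 := by simp [reflRoot]
  rw [hlevel]
  refine hb.2.imp_right fun ⟨hr, hpos⟩ => ⟨hr, reflect_simpleRoot_mem_pos hpos fun h => ?_⟩
  exact hne (Prod.ext h hr)

lemma isAffPos_reflRoot_hshort {b : V × ℤ} (hb : D.IsAffPos b) (hne : b ≠ (-D.hshort, 1)) :
    D.IsAffPos (reflRoot (-D.hshort, 1) b) := by
  obtain ⟨β, r⟩ := b
  have hβ : β ∈ D.R0 := hb.1
  have hr : 1 ≤ r ∨ r = 0 ∧ β ∈ D.pos := hb.2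
  obtain ⟨k, hk⟩ := D.crystallographic β hβ _ D.hshort_mem_R0
  have hrefl : reflRoot (-D.hshort, 1) (β, r) =
      (β - ⟪β, coroot D.hshort⟫ • D.hshort, r + k) := by
    have hfloor : ⌊-(k : ℝ)⌋ = -k := by rw [← Int.cast_neg, Int.floor_intCast]
    simp [reflRoot, coroot_neg, hk, hfloor]
  have hnonneg : 0 ≤ r + k := by
    rcases hr with hr | ⟨rfl, hpos⟩
    · by_cases hβϑ : β = -D.hshort
      · have hk2 : k = -2 := by
          rw [hβϑ, coroot_neg, inner_neg_right,
            inner_coroot_self (D.ne_zero _ D.hshort_mem_R0)] at hk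
          exact_mod_cast hk.symm
        have hr1 : r ≠ 1 := fun h => hne (Prod.ext hβϑ h)
        omega
      · have hk2 := neg_two_lt_inner_hshort_coroot hβ hβϑ
        rw [hk] at hk2
        have : -2 < k := by exact_mod_cast hk2
        omega
    · have := inner_hshort_coroot_nonneg hpos
      rw [hk] at this
      simpa using this
  refine ⟨(D.isAffRoot_aSimple 0).reflRoot hb.1, ?_⟩
  rw [hrefl]
  refine hnonneg.lt_or_eq.imp id fun hzero => ⟨hzero.symm, ?_⟩
  rcases lt_or_ge k 0 with hk0 | hk0
  · exact reflect_hshort_mem_pos hβ (by rw [hk]; exact_mod_cast hk0)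
  · have hcomm := inner_coroot_mul_comm D.hshort β
    obtain rfl : k = 0 := by omega
    rw [hk, Int.cast_zero, zero_mul, mul_eq_zero, or_iff_left
      (inner_self_ne_zero.2 (D.ne_zero _ D.hshort_mem_R0))] at hcomm
    rw [hcomm, zero_smul, sub_zero]
    exact (hr.resolve_left (by omega)).2

lemma isAffPos_reflRoot_aSimple (j : Fin (D.n + 1)) {b : V × ℤ} (hb : D.IsAffPos b)
    (hne : b ≠ D.aSimple j) : D.IsAffPos (reflRoot (D.aSimple j) b) := by
  cases j using Fin.cases with
  | zero => exact isAffPos_reflRoot_hshort hb hne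
  | succ i => exact isAffPos_reflRoot_simpleRoot i hb hne

end SimpleRoots

section OpenAlcove

variable {p : V}

variable (D c) in
/-- The interior of the fundamental alcove. A point of it detects the sign of every affine root. -/
def openAlcove : Set V := {x | ∀ a : V × ℤ, D.IsAffPos a → 0 < aval c a x}

lemma aval_neg_of_isAffNeg (hp : p ∈ D.openAlcove c) {a : V × ℤ} (ha : D.IsAffNeg a) :
    aval c a p < 0 := by
  have := hp _ ha
  rwa [aval_neg, neg_pos] at this

lemma isAffPos_iff (hp : p ∈ D.openAlcove c) {a : V × ℤ} (ha : D.IsAffRoot a) :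
    D.IsAffPos a ↔ 0 < aval c a p :=
  ⟨hp a, fun h => (isAffPos_or_isAffNeg ha).resolve_right fun hneg =>
    h.not_gt (aval_neg_of_isAffNeg hp hneg)⟩

lemma isAffNeg_iff (hp : p ∈ D.openAlcove c) {a : V × ℤ} (ha : D.IsAffRoot a) :
    D.IsAffNeg a ↔ aval c a p < 0 :=
  ⟨aval_neg_of_isAffNeg hp, fun h => (isAffPos_or_isAffNeg ha).resolve_left fun hpos =>
    h.not_gt (hp a hpos)⟩

lemma aval_ne_zero (hp : p ∈ D.openAlcove c) {a : V × ℤ} (ha : D.IsAffRoot a) :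
    aval c a p ≠ 0 :=
  (isAffPos_or_isAffNeg ha).elim (fun h => (hp a h).ne') fun h => (aval_neg_of_isAffNeg hp h).ne

lemma aval_aSimple_pos (hp : p ∈ D.openAlcove c) (j : Fin (D.n + 1)) :
    0 < aval c (D.aSimple j) p :=
  hp _ (D.isAffPos_aSimple j)

/-- Both `ϑ∨ + c` and `-ϑ∨ + c` are positive affine roots. -/
lemma pos_of_mem_openAlcove (hp : p ∈ D.openAlcove c) : 0 < c := by
  have h₁ := hp (D.hshort, 1) ⟨D.hshort_mem_R0, Or.inl le_rfl⟩
  have h₂ := hp (-D.hshort, 1) ⟨neg_mem_R0 D.hshort_mem_R0, Or.inl le_rfl⟩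
  simp only [aval, coroot_neg, inner_neg_right, Int.cast_one] at h₁ h₂
  linarith

/-- A small multiple of a regular dominant vector. -/
lemma openAlcove_nonempty (D : RootSystemData V) (hc : 0 < c) : (D.openAlcove c).Nonempty := by
  obtain ⟨δ, hδ⟩ := D.exists_regular_dominant
  set S := ∑ α ∈ D.R0, |⟪δ, coroot α⟫|
  have : 0 ≤ S := Finset.sum_nonneg fun _ _ => abs_nonneg _
  have hbound : ∀ α ∈ D.R0, |⟪(c / (1 + S)) • δ, coroot α⟫| < c := by
    intro α hα
    have hαS : |⟪δ, coroot α⟫| ≤ S :=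
      Finset.single_le_sum (f := fun α => |⟪δ, coroot α⟫|) (fun _ _ => abs_nonneg _) hα
    rw [real_inner_smul_left, abs_mul, abs_of_pos (by positivity), div_mul_eq_mul_div,
      div_lt_iff₀ (by positivity)]
    nlinarith
  refine ⟨(c / (1 + S)) • δ, fun ⟨α, r⟩ ⟨hα, hr⟩ => ?_⟩
  dsimp only at hα hr
  rcases hr with hr | ⟨rfl, hpos⟩
  · have := neg_lt_of_abs_lt (hbound α hα)
    have hr' : (1 : ℝ) ≤ r := by exact_mod_cast hr
    simp only [aval]
    nlinarith
  · have := inner_coroot_pos (hδ α hpos)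
    simp only [aval, real_inner_smul_left, Int.cast_zero, zero_mul, add_zero]
    positivity

end OpenAlcove

section SeparatingRoots

variable {p q : V}

variable (D c) in
/-- The affine roots whose hyperplane separates `p`, on the positive side, from `q`, on the
negative side. -/
def sepRoots (p q : V) : Set (V × ℤ) := {b | D.IsAffRoot b ∧ 0 < aval c b p ∧ aval c b q < 0}

lemma finite_sepRoots (hc : 0 < c) (p q : V) : (D.sepRoots c p q).Finite := by
  have hfiber (α : V) : {r : ℤ | (α, r) ∈ D.sepRoots c p q}.Finite := by
    refine (Set.finite_Icc ⌊-⟪p, coroot α⟫ / c⌋ ⌈-⟪q, coroot α⟫ / c⌉).subset ?_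
    rintro r ⟨-, hp, hq⟩
    simp only [aval] at hp hq
    refine ⟨Int.cast_le.1 ((Int.floor_le _).trans ?_), Int.cast_le.1 (le_trans ?_ (Int.le_ceil _))⟩
    · rw [div_le_iff₀ hc]
      linarith
    · rw [le_div_iff₀ hc]
      linarith
  refine (D.R0.finite_toSet.biUnion fun α _ => (hfiber α).image (α, ·)).subset ?_
  rintro ⟨α, r⟩ h
  simp only [Set.mem_iUnion]
  exact ⟨α, h.1, r, h, rfl⟩

variable (c) in
/-- The injection `sepRoots p q → sepRoots p (s_a q) \ {a}` when `a` is positive at `p` and `q`. -/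
def foldRoot (a : V × ℤ) (p : V) (b : V × ℤ) : V × ℤ :=
  if 0 < aval c b (sAff c a p) then reflRoot a b else b

lemma foldRoot_mem {a b : V × ℤ} (ha : D.IsAffRoot a) (hap : 0 < aval c a p)
    (haq : 0 < aval c a q) (hb : b ∈ D.sepRoots c p q) :
    foldRoot c a p b ∈ D.sepRoots c p (sAff c a q) \ {a} := by
  obtain ⟨hbroot, hbp, hbq⟩ := hb
  rw [foldRoot]
  split_ifs with h
  · refine ⟨⟨ha.reflRoot hbroot, ?_, ?_⟩, fun he : reflRoot a b = a => ?_⟩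
    · rwa [aval_reflRoot ha hbroot]
    · rwa [aval_reflRoot ha hbroot, sAff_sAff]
    · have hval := aval_reflRoot (c := c) ha hbroot (sAff c a p)
      rw [he, sAff_sAff, aval_sAff_self c (D.ne_zero _ ha)] at hval
      linarith
  · rw [aval_sAff] at h
    have hpair : 0 < ⟪a.1, coroot b.1⟫ := by
      by_contra! hle
      nlinarith
    refine ⟨⟨hbroot, hbp, ?_⟩, fun he : b = a => ?_⟩
    · rw [aval_sAff]
      nlinarith
    · rw [he] at hbq
      linarith

lemma injOn_foldRoot {a : V × ℤ} (ha : D.IsAffRoot a) :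
    Set.InjOn (foldRoot c a p) (D.sepRoots c p q) := by
  rintro b ⟨hb, hbp, -⟩ b' ⟨hb', hbp', -⟩ he
  rw [foldRoot, foldRoot] at he
  split_ifs at he with h h' h'
  · rw [← reflRoot_reflRoot ha hb, he, reflRoot_reflRoot ha hb']
  · rw [← he, aval_reflRoot ha hb, sAff_sAff] at h'
    exact absurd hbp h'
  · rw [he, aval_reflRoot ha hb', sAff_sAff] at h
    exact absurd hbp' h
  · exact he

lemma ncard_sepRoots_lt (hc : 0 < c) {a : V × ℤ} (ha : D.IsAffRoot a) (hap : 0 < aval c a p)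
    (haq : 0 < aval c a q) :
    (D.sepRoots c p q).ncard < (D.sepRoots c p (sAff c a q)).ncard := by
  have hfin := finite_sepRoots (D := D) hc p (sAff c a q)
  have hmem : a ∈ D.sepRoots c p (sAff c a q) :=
    ⟨ha, hap, by rwa [aval_sAff_self c (D.ne_zero _ ha), neg_lt_zero]⟩
  calc (D.sepRoots c p q).ncard
      ≤ (D.sepRoots c p (sAff c a q) \ {a}).ncard :=
        Set.ncard_le_ncard_of_injOn _ (fun _ => foldRoot_mem ha hap haq) (injOn_foldRoot ha)
          (hfin.subset Set.sdiff_subset)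
    _ < _ := Set.ncard_sdiff_singleton_lt_of_mem hmem hfin

lemma ncard_sepRoots_sAff_lt (hc : 0 < c) {a : V × ℤ} (ha : D.IsAffRoot a)
    (hap : 0 < aval c a p) (haq : aval c a q < 0) :
    (D.sepRoots c p (sAff c a q)).ncard < (D.sepRoots c p q).ncard := by
  have h := ncard_sepRoots_lt hc ha hap (q := sAff c a q)
    (by rwa [aval_sAff_self c (D.ne_zero _ ha), neg_pos])
  rwa [sAff_sAff] at h

lemma aval_sAff_aSimple_pos (hp : p ∈ D.openAlcove c) (j : Fin (D.n + 1)) {b : V × ℤ}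
    (hb : D.IsAffRoot b) (hbp : 0 < aval c b p) (hne : b ≠ D.aSimple j) :
    0 < aval c b (sAff c (D.aSimple j) p) := by
  rw [← aval_reflRoot (D.isAffRoot_aSimple j) hb]
  exact hp _ (isAffPos_reflRoot_aSimple j ((isAffPos_iff hp hb).2 hbp) hne)

lemma reflRoot_aSimple_mem_sepRoots (hp : p ∈ D.openAlcove c) (j : Fin (D.n + 1)) {b : V × ℤ}
    (hb : b ∈ D.sepRoots c p q) (hne : b ≠ D.aSimple j) :
    reflRoot (D.aSimple j) b ∈ D.sepRoots c p (sAff c (D.aSimple j) q) := by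
  have ha := D.isAffRoot_aSimple j
  refine ⟨ha.reflRoot hb.1, ?_, ?_⟩
  · rw [aval_reflRoot ha hb.1]
    exact aval_sAff_aSimple_pos hp j hb.1 hb.2.1 hne
  · rw [aval_reflRoot ha hb.1, sAff_sAff]
    exact hb.2.2

lemma sepRoots_sAff_aSimple (hp : p ∈ D.openAlcove c) (j : Fin (D.n + 1))
    (hq : 0 < aval c (D.aSimple j) q) :
    D.sepRoots c p (sAff c (D.aSimple j) q) =
      insert (D.aSimple j) (reflRoot (D.aSimple j) '' D.sepRoots c p q) := by
  have ha := D.isAffRoot_aSimple j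
  refine Set.Subset.antisymm (fun b hb => ?_) (Set.insert_subset ?_ ?_)
  · refine (eq_or_ne b (D.aSimple j)).imp id fun hne => ?_
    have hmem := reflRoot_aSimple_mem_sepRoots hp j hb hne
    rw [sAff_sAff] at hmem
    exact ⟨_, hmem, reflRoot_reflRoot ha hb.1⟩
  · refine ⟨ha, aval_aSimple_pos hp j, ?_⟩
    rwa [aval_sAff_self c (D.ne_zero _ ha), neg_lt_zero]
  · rintro _ ⟨b, hb, rfl⟩
    refine reflRoot_aSimple_mem_sepRoots hp j hb fun he => ?_
    rw [he] at hb
    exact hq.not_gt hb.2.2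

lemma aSimple_notMem_image_reflRoot (hp : p ∈ D.openAlcove c) (j : Fin (D.n + 1)) :
    D.aSimple j ∉ reflRoot (D.aSimple j) '' D.sepRoots c p q := by
  have ha := D.isAffRoot_aSimple j
  rintro ⟨b, ⟨hb, hbp, -⟩, he⟩
  have hval := aval_reflRoot (c := c) ha hb (sAff c (D.aSimple j) p)
  rw [he, sAff_sAff, aval_sAff_self c (D.ne_zero _ ha)] at hval
  linarith [aval_aSimple_pos hp j]

lemma injOn_reflRoot {a : V × ℤ} (ha : D.IsAffRoot a) {s : Set (V × ℤ)}
    (hs : ∀ b ∈ s, D.IsAffRoot b) : Set.InjOn (reflRoot a) s := by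
  intro b hb b' hb' he
  rw [← reflRoot_reflRoot ha (hs b hb), he, reflRoot_reflRoot ha (hs b' hb')]

lemma ncard_sepRoots_sAff_aSimple (hp : p ∈ D.openAlcove c) (j : Fin (D.n + 1))
    (hq : 0 < aval c (D.aSimple j) q) :
    (D.sepRoots c p (sAff c (D.aSimple j) q)).ncard = (D.sepRoots c p q).ncard + 1 := by
  have hfin := finite_sepRoots (D := D) (pos_of_mem_openAlcove hp) p q
  rw [sepRoots_sAff_aSimple hp j hq, Set.ncard_insert_of_notMem
    (aSimple_notMem_image_reflRoot hp j) (hfin.image _),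
    (injOn_reflRoot (D.isAffRoot_aSimple j) fun _ hb => hb.1).ncard_image]

end SeparatingRoots

section AffineWeylGroup

variable {p x : V} {w : Equiv.Perm V} {a : V × ℤ}

lemma exists_aval_eq_comp (hw : w ∈ D.WR c) (ha : D.IsAffRoot a) :
    ∃ b, D.IsAffRoot b ∧ ∀ x, aval c b x = aval c a (w x) := by
  have hrefl : ∀ e ∈ D.AffGens c, ∃ d, D.IsAffRoot d ∧ e = affRefl c d :=
    fun e ⟨d, hd, he⟩ => ⟨d, hd, Equiv.ext he⟩
  induction hw using Subgroup.closure_induction'' generalizing a with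
  | mem e he =>
    obtain ⟨d, hd, rfl⟩ := hrefl e he
    exact ⟨reflRoot d a, hd.reflRoot ha, aval_reflRoot hd ha⟩
  | inv_mem e he =>
    obtain ⟨d, hd, rfl⟩ := hrefl e he
    exact ⟨reflRoot d a, hd.reflRoot ha, aval_reflRoot hd ha⟩
  | one => exact ⟨a, ha, fun _ => rfl⟩
  | mul u v _ _ hu hv =>
    obtain ⟨b, hb, hbu⟩ := hu ha
    obtain ⟨d, hd, hdv⟩ := hv hb
    exact ⟨d, hd, fun x => by rw [hdv, hbu, Equiv.Perm.mul_apply]⟩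

lemma RW_eq_sepRoots (hp : p ∈ D.openAlcove c) (hw : w ∈ D.WR c) :
    D.RW c w = D.sepRoots c p (w⁻¹ p) := by
  ext a
  constructor
  · rintro ⟨ha, b, hb, hab⟩
    exact ⟨ha.1, hp a ha, hab p ▸ aval_neg_of_isAffNeg hp hb⟩
  · rintro ⟨ha, hap, haw⟩
    obtain ⟨b, hb, hba⟩ := exists_aval_eq_comp (inv_mem hw) ha
    exact ⟨(isAffPos_iff hp ha).2 hap, b, (isAffNeg_iff hp hb).2 (hba p ▸ haw),
      fun x => (hba x).symm⟩

lemma len_eq_ncard_sepRoots (hp : p ∈ D.openAlcove c) (hw : w ∈ D.WR c) :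
    D.len c w = (D.sepRoots c p (w⁻¹ p)).ncard := by
  rw [len, RW_eq_sepRoots hp hw]

lemma len_one (hc : 0 < c) : D.len c 1 = 0 := by
  obtain ⟨p, hp⟩ := D.openAlcove_nonempty hc
  rw [len_eq_ncard_sepRoots hp (one_mem _)]
  convert Set.ncard_empty (V × ℤ)
  exact Set.eq_empty_of_forall_notMem fun b hb => hb.2.1.not_gt hb.2.2

lemma aval_inv_ne_zero (hp : p ∈ D.openAlcove c) (hw : w ∈ D.WR c) (ha : D.IsAffRoot a) :
    aval c a (w⁻¹ p) ≠ 0 := by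
  obtain ⟨b, hb, hba⟩ := exists_aval_eq_comp (inv_mem hw) ha
  rw [← hba]
  exact aval_ne_zero hp hb

lemma len_mul_affRefl (hp : p ∈ D.openAlcove c) (hw : w ∈ D.WR c) (ha : D.IsAffRoot a) :
    D.len c (w * affRefl c a) = (D.sepRoots c p (sAff c a (w⁻¹ p))).ncard := by
  rw [len_eq_ncard_sepRoots hp (mul_mem hw (affRefl_mem_WR ha)), mul_inv_rev, affRefl_inv]
  rfl

lemma len_mul_affRefl_lt_iff (hp : p ∈ D.openAlcove c) (hw : w ∈ D.WR c) (ha : D.IsAffPos a) :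
    D.len c (w * affRefl c a) < D.len c w ↔ aval c a (w⁻¹ p) < 0 := by
  have hc := pos_of_mem_openAlcove hp
  rw [len_mul_affRefl hp hw ha.1, len_eq_ncard_sepRoots hp hw]
  refine ⟨fun h => lt_of_not_ge fun hge => ?_, ncard_sepRoots_sAff_lt hc ha.1 (hp a ha)⟩
  exact h.not_gt (ncard_sepRoots_lt hc ha.1 (hp a ha)
    (hge.lt_of_ne (aval_inv_ne_zero hp hw ha.1).symm))

lemma len_mul_affRefl_aSimple (hp : p ∈ D.openAlcove c) (hw : w ∈ D.WR c) (j : Fin (D.n + 1))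
    (h : 0 < aval c (D.aSimple j) (w⁻¹ p)) :
    D.len c (w * affRefl c (D.aSimple j)) = D.len c w + 1 := by
  rw [len_mul_affRefl hp hw (D.isAffRoot_aSimple j), ncard_sepRoots_sAff_aSimple hp j h,
    len_eq_ncard_sepRoots hp hw]

lemma aval_nonpos_of_aval_inv_neg (hp : p ∈ D.openAlcove c) (hw : w ∈ D.WR c)
    (hx : w x ∈ D.alcove c) (ha : D.IsAffRoot a) (h : aval c a (w⁻¹ p) < 0) :
    aval c a x ≤ 0 := by
  obtain ⟨b, hb, hba⟩ := exists_aval_eq_comp (inv_mem hw) ha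
  have hwx := hx _ ((isAffNeg_iff hp hb).2 (hba p ▸ h))
  rw [aval_neg, hba, Equiv.Perm.inv_def, w.symm_apply_apply] at hwx
  linarith

lemma aval_inv_neg_of_aval_neg (hp : p ∈ D.openAlcove c) (hw : w ∈ D.WR c)
    (hx : w x ∈ D.alcove c) (ha : D.IsAffRoot a) (h : aval c a x < 0) :
    aval c a (w⁻¹ p) < 0 := by
  refine (aval_inv_ne_zero hp hw ha).lt_of_le (not_lt.1 fun hpos => ?_)
  have := aval_nonpos_of_aval_inv_neg hp hw hx ha.neg (by rwa [aval_neg, neg_lt_zero])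
  rw [aval_neg] at this
  linarith

lemma bruhatStep_iff {v : Equiv.Perm V} (hp : p ∈ D.openAlcove c) (hw : w ∈ D.WR c) :
    D.bruhatStep c v w ↔
      ∃ a, D.IsAffPos a ∧ aval c a (w⁻¹ p) < 0 ∧ v = w * affRefl c a := by
  have hcancel (u : Equiv.Perm V) (a : V × ℤ) : u * affRefl c a * affRefl c a = u := by
    rw [mul_assoc, affRefl_mul_self, mul_one]
  constructor
  · rintro ⟨a, ha, e, he, rfl, hlen⟩
    obtain rfl : e = affRefl c a := Equiv.ext he
    refine ⟨a, ha, (len_mul_affRefl_lt_iff hp hw ha).1 ?_, (hcancel v a).symm⟩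
    rwa [hcancel]
  · rintro ⟨a, ha, hneg, rfl⟩
    exact ⟨a, ha, affRefl c a, fun _ => rfl, (hcancel w a).symm,
      (len_mul_affRefl_lt_iff hp hw ha).2 hneg⟩

end AffineWeylGroup

section ShortestElements

variable {p x : V} {w : Equiv.Perm V} {wmin : V → Equiv.Perm V}

lemma openAlcove_subset_alcove : D.openAlcove c ⊆ D.alcove c :=
  fun _ hx a ha => (hx a ha).le

lemma IsWmin.eq_of_len_le (hmin : D.IsWmin c wmin) (hw : w ∈ D.WR c) (hx : w x ∈ D.alcove c)
    (hlen : D.len c w ≤ D.len c (wmin x)) : w = wmin x :=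
  ((hmin x).2.2 w hw hx).resolve_left hlen.not_gt

lemma IsWmin.eq_one (hmin : D.IsWmin c wmin) (hc : 0 < c) (hx : x ∈ D.alcove c) : wmin x = 1 :=
  (hmin.eq_of_len_le (one_mem _) hx (len_one (D := D) hc ▸ Nat.zero_le _)).symm

lemma IsWmin.eq_one_of_len_eq_zero (hmin : D.IsWmin c wmin) (hc : 0 < c) (hw : w ∈ D.WR c)
    (hlen : D.len c w = 0) : w = 1 := by
  obtain ⟨p, hp⟩ := D.openAlcove_nonempty hc
  have hempty : D.sepRoots c p (w⁻¹ p) = ∅ := by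
    rwa [len_eq_ncard_sepRoots hp hw, Set.ncard_eq_zero (finite_sepRoots hc _ _)] at hlen
  have hmem : w⁻¹ p ∈ D.alcove c := fun a ha => not_lt.1 fun hneg =>
    hempty.subset ⟨ha.1, hp a ha, hneg⟩
  rw [← hmin.eq_one hc hmem]
  refine hmin.eq_of_len_le hw ?_ (hlen ▸ Nat.zero_le _)
  simpa using openAlcove_subset_alcove hp

lemma IsWmin.exists_aval_inv_neg (hmin : D.IsWmin c wmin) (hp : p ∈ D.openAlcove c)
    (hw : w ∈ D.WR c) (hne : w ≠ 1) : ∃ a, D.IsAffPos a ∧ aval c a (w⁻¹ p) < 0 := by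
  have hlen : D.len c w ≠ 0 :=
    fun h => hne (hmin.eq_one_of_len_eq_zero (pos_of_mem_openAlcove hp) hw h)
  rw [len_eq_ncard_sepRoots hp hw] at hlen
  obtain ⟨a, ha, hap, haw⟩ := Set.nonempty_of_ncard_ne_zero hlen
  exact ⟨a, (isAffPos_iff hp ha).2 hap, haw⟩

lemma IsWmin.descent_induction (hmin : D.IsWmin c wmin) (hp : p ∈ D.openAlcove c)
    {motive : Equiv.Perm V → Prop} (one : motive 1)
    (step : ∀ w ∈ D.WR c, ∀ a, D.IsAffPos a → aval c a (w⁻¹ p) < 0 →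
      motive (w * affRefl c a) → motive w)
    (hw : w ∈ D.WR c) : motive w := by
  induction h : D.len c w using Nat.strong_induction_on generalizing w with
  | _ n ih =>
    rcases eq_or_ne w 1 with rfl | hne
    · exact one
    · obtain ⟨a, ha, hneg⟩ := hmin.exists_aval_inv_neg hp hw hne
      exact step w hw a ha hneg (ih _ (h ▸ (len_mul_affRefl_lt_iff hp hw ha).2 hneg)
        (mul_mem hw (affRefl_mem_WR ha.1)) rfl)

lemma IsWmin.one_bruhatLE (hmin : D.IsWmin c wmin) (hc : 0 < c) (hw : w ∈ D.WR c) :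
    D.bruhatLE c 1 w := by
  obtain ⟨p, hp⟩ := D.openAlcove_nonempty hc
  exact hmin.descent_induction hp .refl (fun w hw a ha hneg ih =>
    ih.tail ((bruhatStep_iff hp hw).2 ⟨a, ha, hneg, rfl⟩)) hw

/-- The reflections of a descent all fix `x`. -/
lemma IsWmin.apply_eq_self (hmin : D.IsWmin c wmin) (hc : 0 < c) (hw : w ∈ D.WR c)
    (hx : x ∈ D.alcove c) : w x ∈ D.alcove c → w x = x := by
  obtain ⟨p, hp⟩ := D.openAlcove_nonempty hc
  refine hmin.descent_induction (motive := fun w => w x ∈ D.alcove c → w x = x) hp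
    (fun _ => rfl) (fun w hw a ha hneg ih hwx => ?_) hw
  have hfix : (w * affRefl c a) x = w x := by
    rw [Equiv.Perm.mul_apply, affRefl_apply, sAff_eq_self
      ((aval_nonpos_of_aval_inv_neg hp hw hwx ha.1 hneg).antisymm (hx a ha))]
  rw [hfix] at ih
  exact ih hwx

lemma IsWmin.apply_eq (hmin : D.IsWmin c wmin) (hc : 0 < c) (hw : w ∈ D.WR c)
    (hx : w x ∈ D.alcove c) : w x = wmin x x := by
  have h := hmin.apply_eq_self hc (mul_mem hw (inv_mem (hmin x).1)) (hmin x).2.1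
  simp only [Equiv.Perm.mul_apply, Equiv.Perm.inv_def, Equiv.symm_apply_apply] at h
  exact h hx

lemma sepRoots_inv_eq (hp : p ∈ D.openAlcove c) (hw : w ∈ D.WR c) (hx : w x ∈ D.alcove c)
    (hwall : ∀ a, D.IsAffPos a → aval c a x = 0 → ¬aval c a (w⁻¹ p) < 0) :
    D.sepRoots c p (w⁻¹ p) = D.sepRoots c p x := by
  ext a
  refine and_congr_right fun ha => and_congr_right fun hap => ⟨fun hneg => ?_,
    aval_inv_neg_of_aval_neg hp hw hx ha⟩
  refine (aval_nonpos_of_aval_inv_neg hp hw hx ha hneg).lt_of_ne fun hzero => ?_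
  exact hwall a ((isAffPos_iff hp ha).2 hap) hzero hneg

lemma IsWmin.sepRoots_inv_eq (hmin : D.IsWmin c wmin) (hp : p ∈ D.openAlcove c) (x : V) :
    D.sepRoots c p ((wmin x)⁻¹ p) = D.sepRoots c p x := by
  obtain ⟨hw, hx, -⟩ := hmin x
  refine RootSystemData.sepRoots_inv_eq hp hw hx fun a ha hzero hneg => ?_
  have hlt := (len_mul_affRefl_lt_iff hp hw ha).2 hneg
  have heq := hmin.eq_of_len_le (mul_mem hw (affRefl_mem_WR ha.1)) (x := x)
    (by rwa [Equiv.Perm.mul_apply, affRefl_apply, sAff_eq_self hzero]) hlt.le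
  exact hlt.ne (congrArg _ heq)

lemma IsWmin.bruhatLE (hmin : D.IsWmin c wmin) (hc : 0 < c) (hw : w ∈ D.WR c)
    (hx : w x ∈ D.alcove c) : D.bruhatLE c (wmin x) w := by
  obtain ⟨p, hp⟩ := D.openAlcove_nonempty hc
  induction h : D.len c w using Nat.strong_induction_on generalizing w with
  | _ n ih =>
    by_cases hwall : ∃ a, D.IsAffPos a ∧ aval c a x = 0 ∧ aval c a (w⁻¹ p) < 0
    · obtain ⟨a, ha, hzero, hneg⟩ := hwall
      refine (ih _ (h ▸ (len_mul_affRefl_lt_iff hp hw ha).2 hneg)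
        (mul_mem hw (affRefl_mem_WR ha.1)) ?_ rfl).tail
        ((bruhatStep_iff hp hw).2 ⟨a, ha, hneg, rfl⟩)
      rwa [Equiv.Perm.mul_apply, affRefl_apply, sAff_eq_self hzero]
    · push Not at hwall
      have heq := RootSystemData.sepRoots_inv_eq hp hw hx fun a ha h0 => (hwall a ha h0).not_gt
      rw [hmin.eq_of_len_le hw hx]
      · exact .refl
      · rw [len_eq_ncard_sepRoots hp hw, heq, ← hmin.sepRoots_inv_eq hp,
          ← len_eq_ncard_sepRoots hp (hmin x).1]

end ShortestElements

section DownwardReflections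

variable {p x y z : V} {a : V × ℤ} {wmin : V → Equiv.Perm V}

variable (D c) in
/-- The relation "`y` is obtained from `x` by reflecting in a positive affine root which is
negative at `x`"; such a reflection moves `x` closer to the fundamental alcove. -/
def downStep (x y : V) : Prop := ∃ a, D.IsAffPos a ∧ aval c a x < 0 ∧ y = sAff c a x

variable (D c) in
/-- The set of points reached from `x` by successive downward reflections; it is the interval
`[x₊, x]`, see `vInterval_eq_downSet`. -/
def downSet (x : V) : Set V := {z | Relation.ReflTransGen (D.downStep c) x z}

variable (D c) in
/-- The polytope `Conv [x₊, x]`, defined without reference to lengths and shortest elements. -/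
def downHull (x : V) : Set V := convexHull ℝ (D.downSet c x)

lemma convex_downHull (x : V) : Convex ℝ (D.downHull c x) := convex_convexHull ℝ _

lemma downSet_subset_downHull (x : V) : D.downSet c x ⊆ D.downHull c x := subset_convexHull ℝ _

lemma self_mem_downHull (x : V) : x ∈ D.downHull c x := downSet_subset_downHull x .refl

lemma sAff_mem_downSet (hz : z ∈ D.downSet c x) (ha : D.IsAffPos a) (h : aval c a z < 0) :
    sAff c a z ∈ D.downSet c x :=
  Relation.ReflTransGen.tail hz ⟨a, ha, h, rfl⟩

lemma inv_mem_downSet_of_bruhatLE (hp : p ∈ D.openAlcove c) (hx : x ∈ D.alcove c)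
    {v w : Equiv.Perm V} (hw : w ∈ D.WR c) (hvw : D.bruhatLE c v w) :
    v ∈ D.WR c ∧ v⁻¹ x ∈ D.downSet c (w⁻¹ x) := by
  induction hvw using Relation.ReflTransGen.head_induction_on with
  | refl => exact ⟨hw, .refl⟩
  | @head v u hstep _ ih =>
    obtain ⟨hu, hux⟩ := ih
    obtain ⟨a, ha, hneg, rfl⟩ := (bruhatStep_iff hp hu).1 hstep
    refine ⟨mul_mem hu (affRefl_mem_WR ha.1), ?_⟩
    rw [mul_inv_rev, affRefl_inv, Equiv.Perm.mul_apply, affRefl_apply]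
    have huinv : u (u⁻¹ x) ∈ D.alcove c := by simpa using hx
    rcases (aval_nonpos_of_aval_inv_neg hp hu huinv ha.1 hneg).lt_or_eq with hlt | hzero
    · exact sAff_mem_downSet hux ha hlt
    · rwa [sAff_eq_self hzero]

lemma IsWmin.vle_of_downStep (hmin : D.IsWmin c wmin) (hc : 0 < c) (h : D.downStep c x y) :
    D.vle c wmin y x := by
  obtain ⟨p, hp⟩ := D.openAlcove_nonempty hc
  obtain ⟨a, ha, hneg, rfl⟩ := h
  obtain ⟨hmem, hx, -⟩ := hmin x
  have hmem' : wmin x * affRefl c a ∈ D.WR c := mul_mem hmem (affRefl_mem_WR ha.1)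
  have hval : (wmin x * affRefl c a) (sAff c a x) = wmin x x := by
    rw [Equiv.Perm.mul_apply, affRefl_apply, sAff_sAff]
  have hal : (wmin x * affRefl c a) (sAff c a x) ∈ D.alcove c := hval ▸ hx
  exact ⟨(hmin.apply_eq hc hmem' hal).symm.trans hval, (hmin.bruhatLE hc hmem' hal).tail
    ((bruhatStep_iff hp hmem).2 ⟨a, ha, aval_inv_neg_of_aval_neg hp hmem hx ha.1 hneg, rfl⟩)⟩

theorem vInterval_eq_downSet (hmin : D.IsWmin c wmin) (hc : 0 < c) (x : V) :
    D.vInterval c wmin (wmin x x) x = D.downSet c x := by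
  obtain ⟨p, hp⟩ := D.openAlcove_nonempty hc
  ext z
  constructor
  · rintro ⟨-, hzx, hle⟩
    have hz := (inv_mem_downSet_of_bruhatLE hp (hmin x).2.1 (hmin x).1 hle).2
    have hinv (y : V) : (wmin y)⁻¹ (wmin y y) = y := by simp
    rwa [hinv, ← hzx, hinv] at hz
  · intro hz
    have hzx : D.vle c wmin z x := by
      induction hz with
      | refl => exact ⟨rfl, .refl⟩
      | tail _ hstep ih =>
        have := hmin.vle_of_downStep hc hstep
        exact ⟨this.1.trans ih.1, this.2.trans ih.2⟩
    refine ⟨⟨?_, ?_⟩, hzx⟩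
    · rw [hmin.eq_one hc (hmin x).2.1, hzx.1, Equiv.Perm.one_apply]
    · rw [hmin.eq_one hc (hmin x).2.1]
      exact hmin.one_bruhatLE hc (hmin z).1

/-- The set `T` consists of the points of the hull from which one can move by some `m • α`,
with `m` at least the depth below the wall, without leaving the hull. Unlike the condition
"`s_a y` lies in the hull whenever `a(y) < 0`", this is visibly convex. -/
lemma sAff_mem_convexHull {S : Set V} (hS : ∀ z ∈ S, aval c a z < 0 → sAff c a z ∈ S)
    (hy : y ∈ convexHull ℝ S) (hneg : aval c a y < 0) : sAff c a y ∈ convexHull ℝ S := by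
  let T : Set V := {y ∈ convexHull ℝ S |
    ∃ m : ℝ, 0 ≤ m ∧ -aval c a y ≤ m ∧ y + m • a.1 ∈ convexHull ℝ S}
  have hconv := convex_convexHull ℝ S
  have hT : Convex ℝ T := by
    rintro u ⟨hu, m, hm, hum, hu'⟩ v ⟨hv, k, hk, hvk, hv'⟩ s t hs ht hst
    refine ⟨hconv hu hv hs ht hst, s * m + t * k, by positivity, ?_, ?_⟩
    · rw [aval_combo c a u v hst]
      linarith [mul_le_mul_of_nonneg_left hum hs, mul_le_mul_of_nonneg_left hvk ht]
    · convert hconv hu' hv' hs ht hst using 1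
      module
  have hST : S ⊆ T := fun z hz => by
    refine ⟨subset_convexHull ℝ S hz, ?_⟩
    rcases lt_or_ge (aval c a z) 0 with h | h
    · refine ⟨-aval c a z, by linarith, le_rfl, subset_convexHull ℝ S ?_⟩
      simpa only [sAff, neg_smul, sub_eq_add_neg] using hS z hz h
    · exact ⟨0, le_rfl, by linarith, by simpa using subset_convexHull ℝ S hz⟩
  obtain ⟨-, m, hm, hym, hy'⟩ := convexHull_min hST hT hy
  have hm0 : 0 < m := by linarith
  have hratio : -aval c a y / m ∈ Set.Icc (0 : ℝ) 1 :=
    ⟨div_nonneg (by linarith) hm, (div_le_one hm0).2 hym⟩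
  convert hconv.add_smul_mem hy hy' hratio using 1
  rw [smul_smul, div_mul_cancel₀ _ hm0.ne', neg_smul, ← sub_eq_add_neg, sAff]

lemma downHull_subset (hy : y ∈ D.downHull c x) : D.downHull c y ⊆ D.downHull c x := by
  refine convexHull_min (fun z hz => ?_) (convex_downHull x)
  induction hz with
  | refl => exact hy
  | tail _ hstep ih =>
    obtain ⟨a, ha, hneg, rfl⟩ := hstep
    exact sAff_mem_convexHull (fun z hz h => sAff_mem_downSet hz ha h) ih hneg

/-- A downward reflection followed by `s_j` is `s_j` followed by a downward reflection, because
`s_j` permutes the positive affine roots other than `a_j`. -/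
lemma sAff_aSimple_mem_downSet (j : Fin (D.n + 1)) (hx : aval c (D.aSimple j) x < 0)
    (hz : z ∈ D.downSet c x) : sAff c (D.aSimple j) z ∈ D.downSet c x := by
  have hj := D.isAffRoot_aSimple j
  induction hz with
  | refl => exact sAff_mem_downSet .refl (D.isAffPos_aSimple j) hx
  | tail hz hstep ih =>
    obtain ⟨b, hb, hneg, rfl⟩ := hstep
    rcases eq_or_ne b (D.aSimple j) with rfl | hne
    · rwa [sAff_sAff]
    · rw [← sAff_reflRoot hj hb.1]
      refine sAff_mem_downSet ih (D.isAffPos_reflRoot_aSimple j hb hne) ?_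
      rwa [aval_reflRoot hj hb.1, sAff_sAff]

lemma sAff_aSimple_mem_downHull (j : Fin (D.n + 1)) (hx : aval c (D.aSimple j) x < 0)
    (hz : z ∈ D.downHull c x) : sAff c (D.aSimple j) z ∈ D.downHull c x := by
  have hT : Convex ℝ {y | sAff c (D.aSimple j) y ∈ D.downHull c x} :=
    fun u hu v hv s t hs ht hst => by
      rw [Set.mem_ofPred_eq, sAff_combo c _ _ _ hst]
      exact convex_downHull x hu hv hs ht hst
  have hsub : D.downHull c x ⊆ {y | sAff c (D.aSimple j) y ∈ D.downHull c x} := convexHull_min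
    (fun y hy => downSet_subset_downHull x (sAff_aSimple_mem_downSet j hx hy)) hT
  exact hsub hz

lemma convex_insert_ball {r : ℝ} (hx : x ∈ Metric.closedBall p r) :
    Convex ℝ (insert x (Metric.ball p r)) := by
  have hsub : insert x (Metric.ball p r) ⊆ Metric.closedBall p r :=
    Set.insert_subset hx Metric.ball_subset_closedBall
  refine convex_iff_openSegment_subset.2 fun u hu v hv => ?_
  rcases eq_or_ne u v with rfl | hne
  · simpa using hu
  · exact (openSegment_subset_ball_of_ne (hsub hu) (hsub hv) hne).trans (Set.subset_insert _ _)

lemma downHull_subset_insert_ball (hp : p ∈ D.openAlcove c) (x : V) :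
    D.downHull c x ⊆ insert x (Metric.ball p ‖x - p‖) := by
  refine convexHull_min (fun z hz => ?_) (convex_insert_ball (by rw [mem_closedBall_iff_norm]))
  induction hz with
  | refl => exact Set.mem_insert _ _
  | tail _ hstep ih =>
    obtain ⟨a, ha, hneg, rfl⟩ := hstep
    refine Or.inr (mem_ball_iff_norm.2 ((norm_sAff_sub_lt (hp a ha) hneg).trans_le ?_))
    rcases ih with rfl | hlt
    · exact le_rfl
    · exact (mem_ball_iff_norm.1 hlt).le

lemma downHull_subset_closedBall (hp : p ∈ D.openAlcove c) (x : V) :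
    D.downHull c x ⊆ Metric.closedBall p ‖x - p‖ :=
  (downHull_subset_insert_ball hp x).trans <|
    Set.insert_subset (by rw [mem_closedBall_iff_norm]) Metric.ball_subset_closedBall

lemma downHull_sAff_subset_ball (hp : p ∈ D.openAlcove c) (ha : D.IsAffPos a)
    (h : aval c a x < 0) : D.downHull c (sAff c a x) ⊆ Metric.ball p ‖x - p‖ :=
  (downHull_subset_closedBall hp _).trans
    (Metric.closedBall_subset_ball (norm_sAff_sub_lt (hp a ha) h))

/-- Of `x` and the rest of its hull, `x` is strictly farthest from `p`, so a segment inside the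
hull passing through `x` has `x` as an end point. -/
lemma eq_sAff_of_mem_segment (hp : p ∈ D.openAlcove c) (j : Fin (D.n + 1))
    (hx : aval c (D.aSimple j) x < 0) (hy : y ∈ D.downHull c (sAff c (D.aSimple j) x))
    (hseg : x ∈ segment ℝ y (sAff c (D.aSimple j) y)) : y = sAff c (D.aSimple j) x := by
  have hj := D.isAffPos_aSimple j
  have hyball := downHull_sAff_subset_ball hp hj hx hy
  have hsy : sAff c (D.aSimple j) y ∈ D.downHull c x := sAff_aSimple_mem_downHull j hx
    (downHull_subset (downSet_subset_downHull x (sAff_mem_downSet .refl hj hx)) hy)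
  rcases downHull_subset_insert_ball hp x hsy with heq | hlt
  · rw [← heq, sAff_sAff]
  · have := mem_ball_iff_norm.1 ((convex_ball p _).segment_subset hyball hlt hseg)
    exact absurd this (lt_irrefl _)

end DownwardReflections

section Lattices

variable {x y : V} {a : V × ℤ} {wmin : V → Equiv.Perm V}

/-- The weight lattice `P` bundled as an additive subgroup. -/
def weightSubgroup (D : RootSystemData V) : AddSubgroup V where
  carrier := D.weightLattice
  add_mem' hx hy α hα := by
    obtain ⟨k, hk⟩ := hx α hα
    obtain ⟨l, hl⟩ := hy α hα
    exact ⟨k + l, by rw [inner_add_left, hk, hl, Int.cast_add]⟩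
  zero_mem' _ _ := ⟨0, by rw [inner_zero_left, Int.cast_zero]⟩
  neg_mem' hx α hα := by
    obtain ⟨k, hk⟩ := hx α hα
    exact ⟨-k, by rw [inner_neg_left, hk, Int.cast_neg]⟩

lemma rootLattice_subset_weightSubgroup : D.rootLattice ⊆ D.weightSubgroup :=
  Submodule.span_le (p := AddSubgroup.toIntSubmodule D.weightSubgroup).2
    fun β hβ α hα => D.crystallographic α hα β hβ

lemma mem_weightLattice_of_sub_mem_rootLattice (hx : x ∈ D.weightLattice)
    (h : x - y ∈ D.rootLattice) : y ∈ D.weightLattice :=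
  sub_sub_cancel x y ▸ D.weightSubgroup.sub_mem hx (rootLattice_subset_weightSubgroup h)

lemma zsmul_mem_rootLattice (ha : D.IsAffRoot a) (k : ℤ) : k • a.1 ∈ D.rootLattice :=
  Submodule.smul_mem _ _ (Submodule.subset_span ha)

lemma exists_aval_eq_intCast (hx : x ∈ D.weightLattice) (ha : D.IsAffRoot a) (m : ℤ) :
    ∃ k : ℤ, aval (m : ℝ) a x = k := by
  obtain ⟨k, hk⟩ := hx _ ha
  exact ⟨k + a.2 * m, by rw [aval, hk]; push_cast; rfl⟩

lemma sub_sAff_mem_rootLattice (hx : x ∈ D.weightLattice) (ha : D.IsAffRoot a) (m : ℤ) :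
    x - sAff (m : ℝ) a x ∈ D.rootLattice := by
  obtain ⟨k, hk⟩ := exists_aval_eq_intCast hx ha m
  rw [sAff, hk, sub_sub_cancel, Int.cast_smul_eq_zsmul]
  exact zsmul_mem_rootLattice ha k

lemma rootLattice_subset_span_simpleBasis :
    D.rootLattice ⊆ Submodule.span ℤ (Set.range D.simpleBasis) := by
  have hpos : ∀ α ∈ D.pos, α ∈ Submodule.span ℤ (Set.range D.simpleBasis) := fun α hα => by
    obtain ⟨k, rfl⟩ := D.pos_natCombo α hα
    refine Submodule.sum_mem _ fun j _ => ?_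
    rw [Nat.cast_smul_eq_nsmul]
    exact Submodule.smul_of_tower_mem _ _ (Submodule.subset_span ⟨j, D.simpleBasis_apply j⟩)
  refine Submodule.span_le.2 fun α hα => ?_
  rcases D.pos_or_neg α hα with h | h
  · exact hpos α h
  · exact neg_neg α ▸ Submodule.neg_mem _ (hpos _ h)

lemma finite_inter_sub_mem_rootLattice {S : Set V} (hS : Bornology.IsBounded S) (x : V) :
    (S ∩ {y | x - y ∈ D.rootLattice}).Finite := by
  have := D.finiteDimensional
  have : ProperSpace V := FiniteDimensional.proper ℝ V
  have hS' : Bornology.IsBounded ((x - ·) '' S) := by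
    simpa only [Set.singleton_sub] using (Bornology.isBounded_singleton (x := x)).sub hS
  refine ((ZSpan.setFinite_inter D.simpleBasis hS').subset ?_).of_finite_image
    (f := (x - ·)) sub_right_injective.injOn
  rintro _ ⟨y, ⟨hyS, hy⟩, rfl⟩
  exact ⟨⟨y, hyS, rfl⟩, rootLattice_subset_span_simpleBasis hy⟩

variable (D c) in
/-- The set `Conv [x₊, x] ∩ (x + Q)`. -/
def lowerPoints (x : V) : Set V := D.downHull c x ∩ {y | x - y ∈ D.rootLattice}

lemma self_mem_lowerPoints (x : V) : x ∈ D.lowerPoints c x :=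
  ⟨self_mem_downHull x, by simp [rootLattice]⟩

lemma sub_mem_rootLattice_trans {z : V} (hxy : x - y ∈ D.rootLattice)
    (hyz : y - z ∈ D.rootLattice) : x - z ∈ D.rootLattice :=
  sub_add_sub_cancel x y z ▸ Submodule.add_mem (Submodule.span ℤ (D.R0 : Set V)) hxy hyz

lemma lowerPoints_subset (hy : y ∈ D.lowerPoints c x) : D.lowerPoints c y ⊆ D.lowerPoints c x :=
  fun _ hz => ⟨downHull_subset hy.1 hz.1, sub_mem_rootLattice_trans hy.2 hz.2⟩

lemma finite_lowerPoints (hc : 0 < c) (x : V) : (D.lowerPoints c x).Finite := by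
  obtain ⟨p, hp⟩ := D.openAlcove_nonempty hc
  exact finite_inter_sub_mem_rootLattice
    (Metric.isBounded_closedBall.subset (downHull_subset_closedBall hp x)) x

theorem setOf_pleq_eq_lowerPoints (hmin : D.IsWmin c wmin) (hc : 0 < c)
    (hx : x ∈ D.weightLattice) :
    {y | y ∈ D.weightLattice ∧ D.pleq c wmin y x} = D.lowerPoints c x := by
  ext y
  simp only [pleq, vInterval_eq_downSet hmin hc]
  exact ⟨fun ⟨_, hQ, hsub⟩ => ⟨hsub (self_mem_downHull y), hQ⟩, fun ⟨hy, hQ⟩ =>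
    ⟨mem_weightLattice_of_sub_mem_rootLattice hx hQ, hQ, downHull_subset hy⟩⟩

end Lattices

section IntegralReflections

variable {R : Type*} [Field R] {x : V} {a : V × ℤ} {τ : V × ℤ → R}

variable (R) in
/-- The coefficients of the discrete integral `J_a` at `x`: `(J_a f)(x)` is the linear combination
of the values of `f` with these coefficients. The case `a(x) = 0` is an empty sum. -/
def jKernel (c : ℝ) (a : V × ℤ) (x : V) : V →₀ R :=
  if 0 < aval c a x then -∑ k ∈ Finset.Icc (1 : ℤ) ⌊aval c a x⌋, Finsupp.single (x - k • a.1) 1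
  else ∑ k ∈ Finset.Ico (0 : ℤ) (-⌊aval c a x⌋), Finsupp.single (x + k • a.1) 1

/-- The coefficients of the integral-reflection operator `I_a` at `x`. -/
def iKernel (c : ℝ) (τ : V × ℤ → R) (a : V × ℤ) (x : V) : V →₀ R :=
  Finsupp.single (sAff c a x) (τ a) + (τ a - (τ a)⁻¹) • jKernel R c a x

lemma Jop_eq_linearCombination (f : V → R) :
    Jop c a f x = Finsupp.linearCombination R f (jKernel R c a x) := by
  unfold Jop jKernel
  split_ifs with hpos hzero
  · simp
  · simp [hzero]
  · simp

lemma Iop_eq_linearCombination (f : V → R) :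
    Iop c τ a f x = Finsupp.linearCombination R f (iKernel c τ a x) := by
  simp [Iop, iKernel, Jop_eq_linearCombination]

lemma sub_smul_mem_segment {k t : ℝ} (hk : k = t * aval c a x) (ht : t ∈ Set.Icc (0 : ℝ) 1) :
    x - k • a.1 ∈ segment ℝ x (sAff c a x) := by
  refine ⟨1 - t, t, by linarith [ht.2], ht.1, by ring, ?_⟩
  rw [hk, sAff]
  module

lemma sub_zsmul_mem_segment {k : ℤ} (hk : k ∈ Finset.Icc 1 ⌊aval c a x⌋) :
    x - k • a.1 ∈ segment ℝ x (sAff c a x) := by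
  obtain ⟨hk1, hk2⟩ := Finset.mem_Icc.1 hk
  have hk0 : (0 : ℝ) < k := by exact_mod_cast zero_lt_one.trans_le hk1
  have hle : k ≤ aval c a x := Int.le_floor.1 hk2
  have hpos := hk0.trans_le hle
  rw [← Int.cast_smul_eq_zsmul ℝ]
  exact sub_smul_mem_segment (div_mul_cancel₀ _ hpos.ne').symm
    ⟨div_nonneg hk0.le hpos.le, (div_le_one hpos).2 hle⟩

lemma add_zsmul_mem_segment {k : ℤ} (hk : k ∈ Finset.Ico 0 (-⌊aval c a x⌋)) :
    x + k • a.1 ∈ segment ℝ x (sAff c a x) := by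
  obtain ⟨hk1, hk2⟩ := Finset.mem_Ico.1 hk
  have hk0 : (0 : ℝ) ≤ k := by exact_mod_cast hk1
  have hlt : aval c a x < -k := by exact_mod_cast Int.floor_lt.1 (lt_neg_of_lt_neg hk2)
  have hneg : aval c a x < 0 := by linarith
  rw [← Int.cast_smul_eq_zsmul ℝ, ← sub_neg_eq_add, ← neg_smul]
  exact sub_smul_mem_segment (div_mul_cancel₀ _ hneg.ne).symm
    ⟨div_nonneg_of_nonpos (by linarith) hneg.le, (div_le_one_of_neg hneg).2 hlt.le⟩

lemma jKernel_mem_supported (ha : D.IsAffRoot a) : jKernel R c a x ∈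
    Finsupp.supported R R (segment ℝ x (sAff c a x) ∩ {y | x - y ∈ D.rootLattice}) := by
  unfold jKernel
  split_ifs
  · refine Submodule.neg_mem _ (Submodule.sum_mem _ fun k hk => Finsupp.single_mem_supported _ _
      ⟨sub_zsmul_mem_segment hk, ?_⟩)
    rw [Set.mem_ofPred_eq, sub_sub_cancel]
    exact zsmul_mem_rootLattice ha k
  · refine Submodule.sum_mem _ fun k hk => Finsupp.single_mem_supported _ _
      ⟨add_zsmul_mem_segment hk, ?_⟩
    rw [Set.mem_ofPred_eq, sub_add_cancel_left, ← neg_smul]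
    exact zsmul_mem_rootLattice ha (-k)

lemma iKernel_mem_supported (hx : x ∈ D.weightLattice) (ha : D.IsAffRoot a) (m : ℤ) :
    iKernel (m : ℝ) τ a x ∈ Finsupp.supported R R
      (segment ℝ x (sAff (m : ℝ) a x) ∩ {y | x - y ∈ D.rootLattice}) :=
  Submodule.add_mem _ (Finsupp.single_mem_supported _ _
      ⟨right_mem_segment ℝ _ _, sub_sAff_mem_rootLattice hx ha m⟩)
    (Submodule.smul_mem _ _ (jKernel_mem_supported ha))

lemma jKernel_apply_sAff {k : ℤ} (ha : a.1 ≠ 0) (hk : aval c a x = k) (hpos : 0 < aval c a x) :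
    jKernel R c a x (sAff c a x) = -1 := by
  have hk1 : (1 : ℤ) ≤ k := by exact_mod_cast hk ▸ hpos
  rw [jKernel, if_pos hpos, hk, Int.floor_intCast, Finsupp.neg_apply, Finsupp.finsetSum_apply,
    Finset.sum_eq_single_of_mem k (Finset.mem_Icc.2 ⟨hk1, le_rfl⟩), sAff, hk,
    Int.cast_smul_eq_zsmul, Finsupp.single_eq_same]
  intro l _ hlk
  refine Finsupp.single_eq_of_ne fun h => hlk ?_
  rw [sAff, hk, sub_right_inj, ← Int.cast_smul_eq_zsmul ℝ] at h
  exact_mod_cast (smul_left_injective ℝ ha h).symm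

lemma iKernel_apply_sAff (hx : x ∈ D.weightLattice) (ha : D.IsAffRoot a) {m : ℤ}
    (hpos : 0 < aval (m : ℝ) a x) : iKernel (m : ℝ) τ a x (sAff (m : ℝ) a x) = (τ a)⁻¹ := by
  obtain ⟨k, hk⟩ := exists_aval_eq_intCast hx ha m
  rw [iKernel, Finsupp.add_apply, Finsupp.single_eq_same, Finsupp.smul_apply,
    jKernel_apply_sAff (D.ne_zero _ ha) hk hpos, smul_eq_mul]
  ring

end IntegralReflections

section Triangularity

variable {R : Type*} [Field R] {x : V} {d : R} {L : (V → R) → R} {τ : V × ℤ → R}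

variable (D c) in
/-- The functional `L` is triangular at `x` with diagonal coefficient `d`: its value at `f` is a
linear combination, with coefficients not depending on `f`, of the values of `f` on
`Conv [x₊, x] ∩ (x + Q)`, in which `f x` has coefficient `d`. -/
def IsTriangularAt (x : V) (d : R) (L : (V → R) → R) : Prop :=
  ∃ K ∈ Finsupp.supported R R (D.lowerPoints c x), K x = d ∧
    ∀ f, L f = Finsupp.linearCombination R f K

lemma isTriangularAt_eval (x : V) : D.IsTriangularAt c x (1 : R) fun f => f x :=
  ⟨Finsupp.single x 1, Finsupp.single_mem_supported _ _ (self_mem_lowerPoints x),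
    Finsupp.single_eq_same, fun f => by simp⟩

lemma IsTriangularAt.const_mul (h : D.IsTriangularAt c x d L) (r : R) :
    D.IsTriangularAt c x (r * d) fun f => r * L f := by
  obtain ⟨K, hK, rfl, hL⟩ := h
  exact ⟨r • K, Submodule.smul_mem _ _ hK, rfl, fun f => by
    simp only [hL, map_smul, smul_eq_mul]⟩

lemma IsTriangularAt.exists_finsum_eq (h : D.IsTriangularAt c x d L) :
    ∃ K : V → R, (∀ f, L f = ∑ᶠ y ∈ D.lowerPoints c x, K y * f y) ∧ K x = d := by
  obtain ⟨K, hK, hd, hL⟩ := h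
  refine ⟨K, fun f => ?_, hd⟩
  rw [finsum_mem_eq_sum_of_subset (t := K.support), hL, Finsupp.linearCombination_apply]
  · rfl
  · exact fun y hy => Finsupp.mem_support_iff.2 (left_ne_zero_of_mul hy.2)
  · exact (Finsupp.mem_supported _ _).1 hK

lemma segment_subset_lowerPoints {y : V} {j : Fin (D.n + 1)} {m : ℤ} (hx : x ∈ D.weightLattice)
    (hneg : aval (m : ℝ) (D.aSimple j) x < 0)
    (hy : y ∈ D.lowerPoints (m : ℝ) (sAff (m : ℝ) (D.aSimple j) x)) :
    segment ℝ y (sAff (m : ℝ) (D.aSimple j) y) ∩ {z | y - z ∈ D.rootLattice} ⊆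
      D.lowerPoints (m : ℝ) x := by
  rintro z ⟨hz, hyz⟩
  have hsx : sAff (m : ℝ) (D.aSimple j) x ∈ D.lowerPoints (m : ℝ) x :=
    ⟨sAff_aSimple_mem_downHull j hneg (self_mem_downHull x),
      sub_sAff_mem_rootLattice hx (D.isAffRoot_aSimple j) m⟩
  have hyx := lowerPoints_subset hsx hy
  exact ⟨(convex_downHull x).segment_subset hyx.1 (sAff_aSimple_mem_downHull j hneg hyx.1) hz,
    sub_mem_rootLattice_trans hyx.2 hyz⟩

/-- As `I_j` only spreads along segments `[y, s_j y]`, the coefficient of `f x` can come from no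
value of `I_j f` other than the one at `s_j x`. -/
lemma iKernel_apply_eq_zero {p y : V} {j : Fin (D.n + 1)} {m : ℤ} (hp : p ∈ D.openAlcove (m : ℝ))
    (hneg : aval (m : ℝ) (D.aSimple j) x < 0) (hyP : y ∈ D.weightLattice)
    (hy : y ∈ D.downHull (m : ℝ) (sAff (m : ℝ) (D.aSimple j) x))
    (hne : y ≠ sAff (m : ℝ) (D.aSimple j) x) : iKernel (m : ℝ) τ (D.aSimple j) y x = 0 := by
  by_contra hnz
  have hsupp := (Finsupp.mem_supported _ _).1
    (iKernel_mem_supported (τ := τ) hyP (D.isAffRoot_aSimple j) m)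
  exact hne (eq_sAff_of_mem_segment hp j hneg hy (hsupp (Finsupp.mem_support_iff.2 hnz)).1)

lemma IsTriangularAt.comp_Iop {j : Fin (D.n + 1)} {m : ℤ} (hx : x ∈ D.weightLattice)
    (hm : 0 < (m : ℝ)) (hneg : aval (m : ℝ) (D.aSimple j) x < 0)
    (h : D.IsTriangularAt (m : ℝ) (sAff (m : ℝ) (D.aSimple j) x) d L) :
    D.IsTriangularAt (m : ℝ) x (d * (τ (D.aSimple j))⁻¹)
      fun f => L (Iop (m : ℝ) τ (D.aSimple j) f) := by
  obtain ⟨p, hp⟩ := D.openAlcove_nonempty hm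
  have ha := D.isAffRoot_aSimple j
  set x' := sAff (m : ℝ) (D.aSimple j) x with hx'_def
  have hx' : x' ∈ D.weightLattice :=
    mem_weightLattice_of_sub_mem_rootLattice hx (sub_sAff_mem_rootLattice hx ha m)
  obtain ⟨K, hK, rfl, hL⟩ := h
  have hlower : ∀ y ∈ K.support, y ∈ D.lowerPoints (m : ℝ) x' := (Finsupp.mem_supported _ _).1 hK
  have hweight : ∀ y ∈ K.support, y ∈ D.weightLattice :=
    fun y hy => mem_weightLattice_of_sub_mem_rootLattice hx' (hlower y hy).2
  have hdiag : iKernel (m : ℝ) τ (D.aSimple j) x' x = (τ (D.aSimple j))⁻¹ := by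
    have hpos : 0 < aval (m : ℝ) (D.aSimple j) x' := by
      rw [aval_sAff_self _ (D.ne_zero _ ha)]
      linarith
    simpa only [hx'_def, sAff_sAff] using iKernel_apply_sAff (τ := τ) hx' ha hpos
  refine ⟨Finsupp.linearCombination R (iKernel (m : ℝ) τ (D.aSimple j)) K, ?_, ?_, fun f => ?_⟩
  · exact Submodule.sum_mem _ fun y hy => Submodule.smul_mem _ _
      (Finsupp.supported_mono (segment_subset_lowerPoints hx hneg (hlower y hy))
        (iKernel_mem_supported (hweight y hy) ha m))
  · rw [Finsupp.linearCombination_apply, Finsupp.sum_apply, ← hdiag]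
    refine Finset.sum_eq_single x' (fun y hy hne => ?_) fun hx'K => ?_
    · simp only [Finsupp.smul_apply, smul_zero,
        iKernel_apply_eq_zero hp hneg (hweight y hy) (hlower y hy).1 hne]
    · simp only [Finsupp.notMem_support_iff.1 hx'K, zero_smul, Finsupp.zero_apply]
  · simp only [hL, Finsupp.linearCombination_linearCombination]
    exact congrArg (Finsupp.linearCombination R · K) (funext fun y => Iop_eq_linearCombination f)

end Triangularity

section ReducedWords

variable {p x : V} {w : Equiv.Perm V} {wmin : V → Equiv.Perm V} {j : Fin (D.n + 1)}
  {l : List (Fin (D.n + 1))}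

variable (D c) in
/-- The product `s_{j₁} ⋯ s_{jℓ}` of the simple reflections along a word. -/
def wordPerm (l : List (Fin (D.n + 1))) : Equiv.Perm V :=
  (l.map fun j => affRefl c (D.aSimple j)).prod

lemma wordPerm_append_singleton :
    D.wordPerm c (l ++ [j]) = D.wordPerm c l * affRefl c (D.aSimple j) := by
  simp [wordPerm]

lemma wordPerm_apply (l : List (Fin (D.n + 1))) (x : V) :
    D.wordPerm c l x = ((l.map fun j => sAff c (D.aSimple j)).foldr (· ∘ ·) id) x := by
  induction l with
  | nil => rfl
  | cons i l ih => exact congrArg (sAff c (D.aSimple i)) ih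

lemma wordPerm_mem_WR (l : List (Fin (D.n + 1))) : D.wordPerm c l ∈ D.WR c :=
  list_prod_mem fun _ he => by
    obtain ⟨j, -, rfl⟩ := List.mem_map.1 he
    exact affRefl_mem_WR (D.isAffRoot_aSimple j)

lemma IsReducedWord.eq_wordPerm (h : D.IsReducedWord c w l) : w = D.wordPerm c l :=
  Equiv.ext fun x => (h.2 x).trans (wordPerm_apply l x).symm

lemma len_mul_affRefl_aSimple_le (hc : 0 < c) (hw : w ∈ D.WR c) (j : Fin (D.n + 1)) :
    D.len c (w * affRefl c (D.aSimple j)) ≤ D.len c w + 1 := by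
  obtain ⟨p, hp⟩ := D.openAlcove_nonempty hc
  rcases (aval_inv_ne_zero hp hw (D.isAffRoot_aSimple j)).lt_or_gt with hneg | hpos
  · exact Nat.le_succ_of_le ((len_mul_affRefl_lt_iff hp hw (D.isAffPos_aSimple j)).2 hneg).le
  · exact (len_mul_affRefl_aSimple hp hw j hpos).le

lemma len_wordPerm_le (hc : 0 < c) (l : List (Fin (D.n + 1))) :
    D.len c (D.wordPerm c l) ≤ l.length := by
  induction l using List.reverseRecOn with
  | nil => exact (len_one hc).le
  | append_singleton l j ih =>
    rw [wordPerm_append_singleton, List.length_append, List.length_singleton]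
    exact (len_mul_affRefl_aSimple_le hc (wordPerm_mem_WR l) j).trans (Nat.succ_le_succ ih)

lemma IsReducedWord.mul_affRefl (hc : 0 < c) (h : D.IsReducedWord c w (l ++ [j])) :
    D.IsReducedWord c (w * affRefl c (D.aSimple j)) l := by
  have hw : w * affRefl c (D.aSimple j) = D.wordPerm c l := by
    rw [h.eq_wordPerm, wordPerm_append_singleton, mul_assoc, affRefl_mul_self, mul_one]
  have hlen : l.length + 1 = D.len c w := by simpa using h.1
  have hle := len_mul_affRefl_aSimple_le hc (wordPerm_mem_WR l) j
  rw [← wordPerm_append_singleton, ← h.eq_wordPerm] at hle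
  refine ⟨?_, fun x => hw ▸ wordPerm_apply l x⟩
  rw [hw]
  exact le_antisymm (by omega) (len_wordPerm_le hc l)

lemma IsReducedWord.aval_inv_neg (hp : p ∈ D.openAlcove c) (h : D.IsReducedWord c w (l ++ [j])) :
    aval c (D.aSimple j) (w⁻¹ p) < 0 := by
  have hw : w ∈ D.WR c := h.eq_wordPerm ▸ wordPerm_mem_WR _
  rw [← len_mul_affRefl_lt_iff hp hw (D.isAffPos_aSimple j), ← h.1,
    ← (h.mul_affRefl (pos_of_mem_openAlcove hp)).1]
  simp

lemma IsWmin.len_eq (hmin : D.IsWmin c wmin) (hp : p ∈ D.openAlcove c) (x : V) :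
    D.len c (wmin x) = (D.sepRoots c p x).ncard := by
  rw [len_eq_ncard_sepRoots hp (hmin x).1, hmin.sepRoots_inv_eq hp]

lemma IsWmin.aval_neg_of_aval_inv_neg {a : V × ℤ} (hmin : D.IsWmin c wmin)
    (hp : p ∈ D.openAlcove c) (ha : D.IsAffPos a) (h : aval c a ((wmin x)⁻¹ p) < 0) :
    aval c a x < 0 := by
  have hmem : a ∈ D.sepRoots c p ((wmin x)⁻¹ p) := ⟨ha.1, hp a ha, h⟩
  rw [hmin.sepRoots_inv_eq hp] at hmem
  exact hmem.2.2

lemma IsWmin.sAff_aSimple (hmin : D.IsWmin c wmin) (hc : 0 < c) (j : Fin (D.n + 1))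
    (hx : aval c (D.aSimple j) x < 0) :
    wmin (sAff c (D.aSimple j) x) = wmin x * affRefl c (D.aSimple j) := by
  obtain ⟨p, hp⟩ := D.openAlcove_nonempty hc
  have hj := D.isAffPos_aSimple j
  obtain ⟨hmem, hal, -⟩ := hmin x
  refine (hmin.eq_of_len_le (mul_mem hmem (affRefl_mem_WR hj.1)) ?_ ?_).symm
  · rwa [Equiv.Perm.mul_apply, affRefl_apply, sAff_sAff]
  · have hlt := (len_mul_affRefl_lt_iff hp hmem hj).2 (aval_inv_neg_of_aval_neg hp hmem hal hj.1 hx)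
    have hpos : 0 < aval c (D.aSimple j) (sAff c (D.aSimple j) x) := by
      rw [aval_sAff_self _ (D.ne_zero _ hj.1)]
      linarith
    have hcard := ncard_sepRoots_sAff_aSimple hp j hpos
    rw [sAff_sAff, ← hmin.len_eq hp, ← hmin.len_eq hp] at hcard
    omega

variable {R : Type*} [Field R] {τ : V × ℤ → R}

lemma wordOp_append_singleton (l : List (Fin (D.n + 1))) (f : V → R) :
    D.wordOp c τ (l ++ [j]) f = D.wordOp c τ l (Iop c τ (D.aSimple j) f) := by
  induction l with
  | nil => rfl
  | cons i l ih => exact congrArg (Iop c τ (D.aSimple i)) ih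

lemma tauw_one (hc : 0 < c) (τ : V × ℤ → R) : D.tauw c τ 1 = 1 := by
  obtain ⟨p, hp⟩ := D.openAlcove_nonempty hc
  have hempty : D.RW c 1 = ∅ := by
    rw [RW_eq_sepRoots hp (one_mem _)]
    exact Set.eq_empty_of_forall_notMem fun b hb => hb.2.1.not_gt hb.2.2
  rw [tauw, hempty, finprod_mem_empty]

lemma IsMultiplicity.apply_reflRoot {a b : V × ℤ} (hτ : D.IsMultiplicity c τ)
    (ha : D.IsAffRoot a) (hb : D.IsAffRoot b) : τ (reflRoot a b) = τ b := by
  refine (hτ.2 (affRefl c a) (Subgroup.subset_closure (Or.inl ⟨a, ha, fun _ => rfl⟩)) b _ hb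
    (ha.reflRoot hb) fun x => ?_).symm
  rw [aval_reflRoot ha hb, affRefl_inv, affRefl_apply]

lemma IsMultiplicity.tauw_eq_mul (hτ : D.IsMultiplicity c τ) (hp : p ∈ D.openAlcove c)
    (hw : w ∈ D.WR c) (h : aval c (D.aSimple j) (w⁻¹ p) < 0) :
    D.tauw c τ w = τ (D.aSimple j) * D.tauw c τ (w * affRefl c (D.aSimple j)) := by
  have hc := pos_of_mem_openAlcove hp
  have hj := D.isAffRoot_aSimple j
  set q := sAff c (D.aSimple j) (w⁻¹ p) with hq_def
  have hq : 0 < aval c (D.aSimple j) q := by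
    rw [aval_sAff_self _ (D.ne_zero _ hj)]
    linarith
  have hRW : D.RW c w =
      insert (D.aSimple j) (reflRoot (D.aSimple j) '' D.sepRoots c p q) := by
    rw [RW_eq_sepRoots hp hw, ← sepRoots_sAff_aSimple hp j hq, hq_def, sAff_sAff]
  have hRW' : D.RW c (w * affRefl c (D.aSimple j)) = D.sepRoots c p q := by
    rw [RW_eq_sepRoots hp (mul_mem hw (affRefl_mem_WR hj)), mul_inv_rev, affRefl_inv]
    rfl
  rw [tauw, tauw, hRW, hRW', finprod_mem_insert _ (aSimple_notMem_image_reflRoot hp j)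
    ((finite_sepRoots hc p q).image _), finprod_mem_image (injOn_reflRoot hj fun _ hb => hb.1)]
  exact congrArg _ (finprod_mem_congr rfl fun b hb => hτ.apply_reflRoot hj hb.1)

theorem isTriangularAt_wordOp {m : ℤ} (hm : 0 < (m : ℝ)) (hτ : D.IsMultiplicity (m : ℝ) τ)
    (hmin : D.IsWmin (m : ℝ) wmin) (hx : x ∈ D.weightLattice)
    (hl : D.IsReducedWord (m : ℝ) (wmin x) l) :
    D.IsTriangularAt (m : ℝ) x (D.tauw (m : ℝ) τ (wmin x))⁻¹
      fun f => D.wordOp (m : ℝ) τ l f (wmin x x) := by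
  obtain ⟨p, hp⟩ := D.openAlcove_nonempty hm
  induction l using List.reverseRecOn generalizing x with
  | nil =>
    have hone : wmin x = 1 := hl.eq_wordPerm
    rw [hone, tauw_one hm, inv_one]
    exact isTriangularAt_eval x
  | append_singleton l j ih =>
    have hneg := hl.aval_inv_neg hp
    have hxneg := hmin.aval_neg_of_aval_inv_neg hp (D.isAffPos_aSimple j) hneg
    have hsx := hmin.sAff_aSimple hm j hxneg
    have hdom : wmin (sAff (m : ℝ) (D.aSimple j) x) (sAff (m : ℝ) (D.aSimple j) x) = wmin x x := by
      rw [hsx, Equiv.Perm.mul_apply, affRefl_apply, sAff_sAff]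
    have htri := ih (mem_weightLattice_of_sub_mem_rootLattice hx
      (sub_sAff_mem_rootLattice hx (D.isAffRoot_aSimple j) m)) (hsx ▸ hl.mul_affRefl hm)
    rw [hdom, hsx] at htri
    simpa only [wordOp_append_singleton, hτ.tauw_eq_mul hp (hmin x).1 hneg, mul_inv_rev]
      using htri.comp_Iop (τ := τ) hx hm hxneg

theorem isTriangularAt_Jcal {m : ℤ} (hm : 0 < (m : ℝ)) (hτ : D.IsMultiplicity (m : ℝ) τ)
    (hmin : D.IsWmin (m : ℝ) wmin) {Iw : Equiv.Perm V → (V → R) → V → R}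
    (hx : x ∈ D.weightLattice) (hl : D.IsReducedWord (m : ℝ) (wmin x) l)
    (hIw : Iw (wmin x) = D.wordOp (m : ℝ) τ l) :
    D.IsTriangularAt (m : ℝ) x (D.tauw (m : ℝ) τ (wmin x) ^ 2)⁻¹
      fun f => D.Jcal (m : ℝ) τ wmin Iw f x := by
  rw [sq, mul_inv]
  simpa only [Jcal, hIw] using (isTriangularAt_wordOp hm hτ hmin hx hl).const_mul _

end ReducedWords

theorem statement5_general {R : Type*} [Field R] (D : RootSystemData V) (cz : ℤ) (hc : 0 < cz)
    (τ : V × ℤ → R) (hτ : D.IsMultiplicity (cz : ℝ) τ)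
    (wmin : V → Equiv.Perm V) (hwmin : D.IsWmin (cz : ℝ) wmin)
    (Iw : Equiv.Perm V → (V → R) → V → R)
    (hIw : ∀ x : V, ∃ l : List (Fin (D.n + 1)),
      D.IsReducedWord (cz : ℝ) (wmin x) l ∧ Iw (wmin x) = D.wordOp (cz : ℝ) τ l) :
    (∀ lam ∈ D.weightLattice,
      {μ : V | μ ∈ D.weightLattice ∧ D.pleq (cz : ℝ) wmin μ lam}
          = convexHull ℝ (D.vInterval (cz : ℝ) wmin ((wmin lam) lam) lam)
            ∩ {μ : V | lam - μ ∈ D.rootLattice} ∧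
      Set.Finite {μ : V | μ ∈ D.weightLattice ∧ D.pleq (cz : ℝ) wmin μ lam}) ∧
    (∃ J : V → V → R, ∀ lam ∈ D.weightLattice,
      (∀ f : V → R,
        D.Jcal (cz : ℝ) τ wmin Iw f lam
          = ∑ᶠ μ ∈ {μ : V | μ ∈ D.weightLattice ∧ D.pleq (cz : ℝ) wmin μ lam},
              J lam μ * f μ) ∧
      J lam lam = ((D.tauw (cz : ℝ) τ (wmin lam)) ^ 2)⁻¹) := by
  have hc : 0 < (cz : ℝ) := Int.cast_pos.2 hc
  refine ⟨fun lam hlam => ?_, ?_⟩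
  · rw [setOf_pleq_eq_lowerPoints hwmin hc hlam, vInterval_eq_downSet hwmin hc]
    exact ⟨rfl, finite_lowerPoints hc lam⟩
  · have hJ : ∀ lam ∈ D.weightLattice, ∃ J : V → R,
        (∀ f, D.Jcal (cz : ℝ) τ wmin Iw f lam = ∑ᶠ μ ∈ D.lowerPoints cz lam, J μ * f μ) ∧
          J lam = (D.tauw (cz : ℝ) τ (wmin lam) ^ 2)⁻¹ := fun lam hlam =>
      have ⟨_, hl, hlIw⟩ := hIw lam
      (isTriangularAt_Jcal hc hτ hwmin hlam hl hlIw).exists_finsum_eq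
    choose! J hJ using hJ
    refine ⟨J, fun lam hlam => ?_⟩
    rw [setOf_pleq_eq_lowerPoints hwmin hc hlam]
    exact hJ lam hlam

end RootSystemData

open RootSystemData in
/-- (a) the set of weights `⪯`-below a given `λ ∈ P` equals
`Conv [λ₊, λ] ∩ (λ + Q)` and is finite; (b) the intertwining operator `𝒥` is
triangular with respect to `⪯`, with diagonal coefficient `J_{λ,λ} = τ_{w_λ}⁻²`. -/
theorem statement5 {V : Type*} [NormedAddCommGroup V] [InnerProductSpace ℝ V]
    (D : RootSystemData V) (cz : ℤ) (hc : 1 < cz)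
    (τ : V × ℤ → ℂ) (hτ : D.IsMultiplicity (cz : ℝ) τ)
    (wmin : V → Equiv.Perm V) (hwmin : D.IsWmin (cz : ℝ) wmin)
    (Iw : Equiv.Perm V → (V → ℂ) → V → ℂ)
    (hIw : ∀ x : V, ∃ l : List (Fin (D.n + 1)),
      D.IsReducedWord (cz : ℝ) (wmin x) l ∧ Iw (wmin x) = D.wordOp (cz : ℝ) τ l) :
    -- (a)
    (∀ lam ∈ D.weightLattice,
      {μ : V | μ ∈ D.weightLattice ∧ D.pleq (cz : ℝ) wmin μ lam}
          = convexHull ℝ (D.vInterval (cz : ℝ) wmin ((wmin lam) lam) lam)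
            ∩ {μ : V | lam - μ ∈ D.rootLattice} ∧
      Set.Finite {μ : V | μ ∈ D.weightLattice ∧ D.pleq (cz : ℝ) wmin μ lam}) ∧
    -- (b)
    (∃ J : V → V → ℂ, ∀ lam ∈ D.weightLattice,
      (∀ f : V → ℂ,
        D.Jcal (cz : ℝ) τ wmin Iw f lam
          = ∑ᶠ μ ∈ {μ : V | μ ∈ D.weightLattice ∧ D.pleq (cz : ℝ) wmin μ lam},
              J lam μ * f μ) ∧
      J lam lam = ((D.tauw (cz : ℝ) τ (wmin lam)) ^ 2)⁻¹) :=
  statement5_general D cz (zero_lt_one.trans hc) τ hτ wmin hwmin Iw hIw
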